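/- arXiv:1501.01489 — 3 statements merged into one kernel-verified Lean document; each statement's English description precedes it below -/
import Mathlib

section
/- Let k = k(n) be a function of n with k(n) → ∞ and k(n)²/n → 0 as n→∞, and let R_k denote the number of chords in the k-core of the uniformly random chord diagram C_n of size n. Then (n − R_{k(n)})/k(n) → 1 in probability as n→∞. -/
open scoped Classical
open Finset Filter

/-- A chord diagram of size `n`: a fixed-point-free involution of the `2n`
endpoints `0, 1, …, 2n-1` (endpoint `i` here corresponds to the label `i+1`). -/
abbrev ChordDiagram (n : ℕ) :=
  {f : Fin (2*n) → Fin (2*n) // (∀ i, f (f i) = i) ∧ ∀ i, f i ≠ i}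

/-- `c` lies strictly between `a` and `b`. -/
def Between {m : ℕ} (a b c : Fin m) : Prop := min a b < c ∧ c < max a b

/-- The chord of `C` containing endpoint `x` crosses the chord containing endpoint `u`:
exactly one of the two endpoints `u`, `C u` lies strictly between `x` and `C x`. -/
def Crosses {n : ℕ} (C : ChordDiagram n) (x u : Fin (2*n)) : Prop :=
  Xor' (Between x (C.1 x) u) (Between x (C.1 x) (C.1 u))

/-- Uniform probability of an event over all chord diagrams of size `n`. -/
noncomputable def prob (n : ℕ) (E : ChordDiagram n → Prop) : ℝ :=
  ((Finset.univ.filter E).card : ℝ) / ((Finset.univ : Finset (ChordDiagram n)).card : ℝ)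

/-- The degree of the chord of `C` containing endpoint `x`: the number of chords
crossing it (each chord counted once via its smaller endpoint). -/
noncomputable def chordDegree {n : ℕ} (C : ChordDiagram n) (x : Fin (2*n)) : ℕ :=
  (Finset.univ.filter fun u => u < C.1 u ∧ Crosses C x u).card

/-- The length of the chord of `C` containing endpoint `x`: the number of endpoints
on the smaller of the two arcs it determines. -/
def chordLength {n : ℕ} (C : ChordDiagram n) (x : Fin (2*n)) : ℕ :=
  min (max (x:ℕ) (C.1 x : ℕ) - min (x:ℕ) (C.1 x : ℕ) - 1)
      (2*n - (max (x:ℕ) (C.1 x : ℕ) - min (x:ℕ) (C.1 x : ℕ)) - 1)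

/-- Degree of the chord containing endpoint `1` (index `0`). -/
noncomputable def degreeC1 (n : ℕ) (C : ChordDiagram n) : ℕ :=
  if h : 0 < n then chordDegree C ⟨0, by omega⟩ else 0

/-- Length of the chord containing endpoint `1` (index `0`). -/
noncomputable def lengthC1 (n : ℕ) (C : ChordDiagram n) : ℕ :=
  if h : 0 < n then chordLength C ⟨0, by omega⟩ else 0

/-- Membership in the component (w.r.t. the crossing relation) of the chord
containing the root endpoint. -/
def InRootComponent {n : ℕ} (C : ChordDiagram n) (root x : Fin (2*n)) : Prop :=
  x = root ∨ x = C.1 root ∨ Relation.ReflTransGen (fun a b => Crosses C a b) root x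

/-- The chord containing `x` is simple: it joins two (cyclically) consecutive endpoints. -/
def IsSimple {n : ℕ} (C : ChordDiagram n) (x : Fin (2*n)) : Prop :=
  (C.1 x : ℕ) = ((x : ℕ) + 1) % (2*n) ∨ (x : ℕ) = ((C.1 x : ℕ) + 1) % (2*n)

/-- `C` is monolithic (with respect to `root`): every chord not in the root
component is simple, and no two simple chords are next to each other. -/
def Monolithic {n : ℕ} (C : ChordDiagram n) (root : Fin (2*n)) : Prop :=
  (∀ x : Fin (2*n), ¬ InRootComponent C root x → IsSimple C x) ∧
  ¬ ∃ i : Fin (2*n), (C.1 i : ℕ) = ((i : ℕ) + 1) % (2*n) ∧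
      ∃ j : Fin (2*n), (j : ℕ) = ((i : ℕ) + 2) % (2*n) ∧ (C.1 j : ℕ) = ((i : ℕ) + 3) % (2*n)

/-- `L_j`: the number of chords of length `j` in `C`. -/
noncomputable def lengthCount (n : ℕ) (j : ℕ) (C : ChordDiagram n) : ℕ :=
  (Finset.univ.filter fun x : Fin (2*n) => x < C.1 x ∧ chordLength C x = j).card

/-- The endpoints of chords of `C` of length at least `k`. -/
noncomputable def lenAtLeast (n k : ℕ) (C : ChordDiagram n) : Finset (Fin (2*n)) :=
  Finset.univ.filter fun x => k ≤ chordLength C x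

/-- The number of chords with endpoints in `S` crossing the chord containing `x`. -/
noncomputable def degreeIn {n : ℕ} (C : ChordDiagram n) (S : Finset (Fin (2*n)))
    (x : Fin (2*n)) : ℕ :=
  (S.filter fun u => u < C.1 u ∧ Crosses C x u).card

/-- `S` (a chord-closed set of endpoints) is a set of chords each crossing at
least `k` other chords of `S`. -/
def IsCore {n : ℕ} (C : ChordDiagram n) (k : ℕ) (S : Finset (Fin (2*n))) : Prop :=
  (∀ x ∈ S, C.1 x ∈ S) ∧ ∀ x ∈ S, k ≤ degreeIn C S x

/-- The `k`-core: the union of all sets of chords in which every chord crosses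
at least `k` other chords of the set. -/
noncomputable def kCore (n k : ℕ) (C : ChordDiagram n) : Finset (Fin (2*n)) :=
  Finset.univ.filter fun x => ∃ S : Finset (Fin (2*n)), IsCore C k S ∧ x ∈ S

/-- The number of chords in the `k`-core of `C`. -/
noncomputable def kCoreSize (n k : ℕ) (C : ChordDiagram n) : ℕ :=
  ((kCore n k C).filter fun x => x < C.1 x).card

/-- `Z_k`: the number of chords of length strictly less than `k`. -/
noncomputable def shortCount (n k : ℕ) (C : ChordDiagram n) : ℕ :=
  (Finset.univ.filter fun x : Fin (2*n) => x < C.1 x ∧ chordLength C x < k).card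

/-- `C` contains a balanced clique of size `m`: a set of `m` pairwise crossing
chords with exactly one endpoint in each of the `2m` blocks of length `⌊n/m⌋`. -/
def HasBalancedClique (n m : ℕ) (C : ChordDiagram n) : Prop :=
  ∃ S : Finset (Fin (2*n)),
    (∀ x ∈ S, C.1 x ∈ S) ∧
    (∀ x ∈ S, ∀ u ∈ S, u ≠ x → u ≠ C.1 x → Crosses C x u) ∧
    (∀ t : ℕ, 1 ≤ t → t ≤ 2*m →
      (S.filter fun x => (t-1) * (n/m) ≤ (x:ℕ) ∧ (x:ℕ) < t * (n/m)).card = 1)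

/-- An oriented chord diagram: a chord diagram together with auxiliary fair-coin
bits; the bit attached to a crossing pair of chords (indexed by their smaller
endpoints) decides which chord over-crosses the other. -/
abbrev OrientedChordDiagram (n : ℕ) := ChordDiagram n × (Fin (2*n) → Fin (2*n) → Bool)

/-- The smaller endpoint of the chord of `C` containing `x`. -/
def chordRep {n : ℕ} (C : ChordDiagram n) (x : Fin (2*n)) : Fin (2*n) := min x (C.1 x)

/-- In the oriented diagram `D`, the chord containing `x` crosses and
over-crosses the chord containing `u`. -/
def OverD {n : ℕ} (D : OrientedChordDiagram n) (x u : Fin (2*n)) : Prop :=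
  Crosses D.1 x u ∧
    ((chordRep D.1 x ≤ chordRep D.1 u ∧ D.2 (chordRep D.1 x) (chordRep D.1 u) = true) ∨
     (chordRep D.1 u < chordRep D.1 x ∧ D.2 (chordRep D.1 u) (chordRep D.1 x) = false))

/-- Uniform probability of an event over all oriented chord diagrams of size `n`
(this yields a uniformly random diagram with each crossing oriented by an
independent fair coin). -/
noncomputable def probD (n : ℕ) (E : OrientedChordDiagram n → Prop) : ℝ :=
  ((Finset.univ.filter E).card : ℝ) /
    ((Finset.univ : Finset (OrientedChordDiagram n)).card : ℝ)

/-- The chords (given by their endpoints in `S`) are strongly connected in the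
directed intersection graph of `D`, using only chords of `S`. -/
def StronglyConnectedIn {n : ℕ} (D : OrientedChordDiagram n) (S : Set (Fin (2*n))) : Prop :=
  ∀ c ∈ S, ∀ d ∈ S,
    Relation.ReflTransGen (fun a b => a ∈ S ∧ b ∈ S ∧ OverD D a b) c d

/-- The number of chords with both endpoints in the cyclic block
`{i, i+1, …, i+t-1}` (mod `2n`). -/
noncomputable def chordsInBlock (n : ℕ) (C : ChordDiagram n) (i t : ℕ) : ℕ :=
  (Finset.univ.filter fun x : Fin (2*n) => x < C.1 x ∧
    (∃ a < t, (x:ℕ) = (i + a) % (2*n)) ∧ (∃ a < t, ((C.1 x : ℕ)) = (i + a) % (2*n))).card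

/-- The chord of `x` reaches the chord of `u` in the directed intersection graph
(of the whole diagram); endpoints of the same chord represent the same vertex. -/
def ReachChord {n : ℕ} (D : OrientedChordDiagram n) (x u : Fin (2*n)) : Prop :=
  u = x ∨ u = D.1.1 x ∨ Relation.ReflTransGen (fun a b => OverD D a b) x u

/-- The chords of `x` and `u` lie in the same strong component. -/
def MutualReach {n : ℕ} (D : OrientedChordDiagram n) (x u : Fin (2*n)) : Prop :=
  ReachChord D x u ∧ ReachChord D u x

/-- The number of single-chord strong components of `D`. -/
noncomputable def singleCount (n : ℕ) (D : OrientedChordDiagram n) : ℕ :=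
  (Finset.univ.filter fun x : Fin (2*n) =>
    x < D.1.1 x ∧ ∀ u : Fin (2*n), u ≠ x → u ≠ D.1.1 x → ¬ MutualReach D x u).card

/-!
A chord crosses at most as many chords as its length, the number of endpoints on its short arc, so
no chord shorter than `k` is in the `k`-core. Conversely, if `r` is slightly larger than `k`, then
with high probability the chords of length at least `r` form a set of minimum degree `k`:

* Every endpoint on the short arc of a chord of length `l` belongs to a longer, hence crossing,
  chord or to one of the pairs of length at most `l` meeting the arc. There are `O(l ^ 2)` such
  pairs, each a chord with probability about `1 / (2 * n)`, so for `r ≤ l ≤ cn` a union bound shows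
  that they use up a fraction `δ` of the arc with probability at most `ρ ^ l` for some `ρ < 1`.
  Summing over the `O(n)` potential chords of each length, each present with probability
  `O(1 / n)`, leaves `O(ρ ^ r)`.
* A chord longer than `cn` separates two blocks of linear size, and by Chebyshev's inequality any
  two such blocks are joined by linearly many chords.

Finally the number of chords shorter than `r` has mean asymptotic to `r` and variance `O(r)`, so
`n - R_k` lies between quantities concentrated around `k` and `r`.
-/

namespace ChordDiagram

open MeasureTheory ProbabilityTheory

variable {n : ℕ}

lemma involutive (C : ChordDiagram n) : Function.Involutive C.1 := C.2.1

lemma apply_ne (C : ChordDiagram n) (x : Fin (2 * n)) : C.1 x ≠ x := C.2.2 x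

instance : Nonempty (ChordDiagram n) :=
  ⟨⟨Fin.rev, Fin.rev_rev, fun i h => by
    have := congrArg Fin.val h
    rw [Fin.val_rev] at this
    omega⟩⟩

/-- The uniform probability measure on chord diagrams of size `n`: the measure-theoretic form of
`prob`, through which Mathlib's variance and union bounds apply. -/
noncomputable def uniform (n : ℕ) : Measure (ChordDiagram n) := uniformOn Set.univ

instance : IsProbabilityMeasure (uniform n) :=
  isProbabilityMeasure_uniformOn Set.finite_univ Set.univ_nonempty

lemma prob_eq_real (E : ChordDiagram n → Prop) : prob n E = (uniform n).real {C | E C} := by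
  rw [uniform, measureReal_def, uniformOn_univ, Measure.count_apply_finite _ (Set.toFinite _),
    ENNReal.toReal_div, ENNReal.toReal_natCast, ENNReal.toReal_natCast, prob]
  congr 2
  congr 1
  ext
  simp

lemma real_uniform (s : Set (ChordDiagram n)) :
    (uniform n).real s = #{C | C ∈ s} / Fintype.card (ChordDiagram n) :=
  (prob_eq_real (· ∈ s)).symm

/-- Relabelling the endpoints of a chord diagram by the permutation `σ`. -/
def permute (σ : Equiv.Perm (Fin (2 * n))) : ChordDiagram n ≃ ChordDiagram n where
  toFun C := ⟨σ ∘ C.1 ∘ σ.symm, fun i => by simp [C.2.1], fun i h =>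
    C.2.2 (σ.symm i) (σ.eq_symm_apply.2 h)⟩
  invFun C := ⟨σ.symm ∘ C.1 ∘ σ, fun i => by simp [C.2.1], fun i h =>
    C.2.2 (σ i) (σ.symm_apply_eq.1 h)⟩
  left_inv C := by ext; simp
  right_inv C := by ext; simp

lemma permute_apply (σ : Equiv.Perm (Fin (2 * n))) (C : ChordDiagram n) (x : Fin (2 * n)) :
    (permute σ C).1 x = σ (C.1 (σ.symm x)) := rfl

lemma real_preimage_permute (σ : Equiv.Perm (Fin (2 * n))) (s : Set (ChordDiagram n)) :
    (uniform n).real (permute σ ⁻¹' s) = (uniform n).real s := by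
  rw [real_uniform, real_uniform]
  congr 2
  exact card_equiv (permute σ) (by simp)

lemma card_mul_real_apply_eq {Q : Set (ChordDiagram n)} {V : Finset (Fin (2 * n))}
    {a b : Fin (2 * n)} (ha : a ∉ V) (hb : b ∈ V)
    (hQ : ∀ v ∈ V, ∀ w ∈ V, ∀ C ∈ Q, permute (Equiv.swap v w) C ∈ Q) :
    #V * (uniform n).real {C ∈ Q | C.1 a = b} = (uniform n).real {C ∈ Q | C.1 a ∈ V} := by
  have hle : ∀ v ∈ V, ∀ w ∈ V, (uniform n).real {C ∈ Q | C.1 a = v} ≤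
      (uniform n).real {C ∈ Q | C.1 a = w} := fun v hv w hw => by
    rw [← real_preimage_permute (Equiv.swap v w) {C ∈ Q | C.1 a = w}]
    refine measureReal_mono fun C hC => ⟨hQ v hv w hw C hC.1, ?_⟩
    rw [permute_apply, Equiv.symm_swap, Equiv.swap_apply_of_ne_of_ne
      (ne_of_mem_of_not_mem hv ha).symm (ne_of_mem_of_not_mem hw ha).symm, hC.2,
      Equiv.swap_apply_left]
  have hunion : {C ∈ Q | C.1 a ∈ V} = ⋃ v ∈ V, {C ∈ Q | C.1 a = v} := by
    ext C; simp
  rw [hunion, measureReal_biUnion_finset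
    (fun v _ w _ hvw => Set.disjoint_left.2 fun C hv hw => hvw (hv.2.symm.trans hw.2))
    fun _ _ => .of_discrete, ← nsmul_eq_mul, ← sum_const]
  exact sum_congr rfl fun v hv => le_antisymm (hle b hb v hv) (hle v hv b hb)

lemma real_apply_eq {x y : Fin (2 * n)} (hxy : x ≠ y) :
    (uniform n).real {C | C.1 x = y} = 1 / (2 * n - 1) := by
  have h := card_mul_real_apply_eq (Q := Set.univ) (notMem_erase x univ)
    (mem_erase.2 ⟨hxy.symm, mem_univ y⟩) fun _ _ _ _ _ _ => Set.mem_univ _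
  have hn : 1 ≤ 2 * n := (Nat.zero_le _).trans_lt x.2
  rw [card_erase_of_mem (mem_univ x), card_univ, Fintype.card_fin, Nat.cast_sub hn] at h
  have hne : (2 * n - 1 : ℝ) ≠ 0 := by
    have : (1 : ℝ) ≤ n := by exact_mod_cast (by omega : 1 ≤ n)
    linarith
  simp only [Set.mem_univ, true_and, mem_erase, apply_ne, ne_eq, not_false_eq_true, and_self,
    Set.ofPred_true, mem_univ, probReal_univ] at h
  rw [eq_div_iff hne, mul_comm]
  exact_mod_cast h

section Cylinder

variable {E F : Finset (Fin (2 * n) × Fin (2 * n))} {e f : Fin (2 * n) × Fin (2 * n)}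

/-- The event that every pair in `F` is a chord. -/
def cylinder (F : Finset (Fin (2 * n) × Fin (2 * n))) : Set (ChordDiagram n) :=
  {C | ∀ e ∈ F, C.1 e.1 = e.2}

/-- A set of ordered pairs of endpoints representing each potential chord at most once; in
particular it contains no pair `(x, x)`. -/
def IsOriented (E : Finset (Fin (2 * n) × Fin (2 * n))) : Prop := ∀ e ∈ E, e.swap ∉ E

namespace IsOriented

lemma fst_ne_snd (hE : IsOriented E) (he : e ∈ E) : e.1 ≠ e.2 := fun h =>
  hE e he <| by rwa [show e.swap = e from Prod.ext h.symm h]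

lemma mono (hE : IsOriented E) (hFE : F ⊆ E) : IsOriented F :=
  fun e he he' => hE e (hFE he) (hFE he')

lemma two_mul_card_le (hE : IsOriented E) : 2 * #E ≤ 2 * n * (2 * n - 1) := by
  have hdisj : Disjoint E (E.image Prod.swap) := disjoint_left.2 fun e he he' => by
    obtain ⟨f, hf, rfl⟩ := mem_image.1 he'
    exact hE f hf he
  have hsub : E ∪ E.image Prod.swap ⊆ (univ : Finset (Fin (2 * n))).offDiag := by
    intro e he
    rw [mem_offDiag]
    obtain he | he := mem_union.1 he
    · exact ⟨mem_univ _, mem_univ _, hE.fst_ne_snd he⟩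
    · obtain ⟨f, hf, rfl⟩ := mem_image.1 he
      exact ⟨mem_univ _, mem_univ _, (hE.fst_ne_snd hf).symm⟩
  have hcard := card_le_card hsub
  rw [card_union_of_disjoint hdisj, card_image_of_injective _ Prod.swap_injective, offDiag_card,
    card_univ, Fintype.card_fin] at hcard
  rw [Nat.mul_sub_one]
  omega

protected lemma insert (hE : IsOriented E) (hne : e.1 ≠ e.2) (he : e.swap ∉ E) :
    IsOriented (insert e E) := by
  intro f hf hf'
  obtain rfl | hf := mem_insert.1 hf <;> obtain hs | hf' := mem_insert.1 hf'
  · exact hne (congrArg Prod.snd hs)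
  · exact he hf'
  · exact he (by rwa [← hs, Prod.swap_swap])
  · exact hE f hf hf'

end IsOriented

lemma cylinder_insert (e : Fin (2 * n) × Fin (2 * n)) (F : Finset (Fin (2 * n) × Fin (2 * n))) :
    cylinder (insert e F) = {C ∈ cylinder F | C.1 e.1 = e.2} := by
  ext C
  simp only [cylinder, mem_insert, forall_eq_or_imp, Set.mem_ofPred_eq, and_comm]

/-- The endpoints occurring in the pairs of `F`. -/
def endpoints (F : Finset (Fin (2 * n) × Fin (2 * n))) : Finset (Fin (2 * n)) :=
  F.image Prod.fst ∪ F.image Prod.snd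

lemma card_endpoints_le (F : Finset (Fin (2 * n) × Fin (2 * n))) : #(endpoints F) ≤ 2 * #F :=
  (card_union_le _ _).trans <| two_mul #F ▸ add_le_add card_image_le card_image_le

lemma snd_notMem_endpoints (he : e ∉ F) (hs : e.swap ∉ F) {C : ChordDiagram n}
    (hC : C ∈ cylinder F) (hCe : C.1 e.1 = e.2) : e.2 ∉ endpoints F := by
  intro h
  obtain h | h := mem_union.1 h <;> obtain ⟨f, hf, hfe⟩ := mem_image.1 h
  · have hfs : f = e.swap := Prod.ext hfe (by
      rw [← hC f hf, hfe, ← hCe, C.involutive, Prod.snd_swap])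
    exact hs (hfs ▸ hf)
  · have hfe' : f = e := Prod.ext (C.involutive.injective (by rw [hC f hf, hfe, hCe])) hfe
    exact he (hfe' ▸ hf)

lemma permute_swap_mem_cylinder {v w : Fin (2 * n)} (hv : v ∉ endpoints F) (hw : w ∉ endpoints F)
    {C : ChordDiagram n} (hC : C ∈ cylinder F) :
    permute (Equiv.swap v w) C ∈ cylinder F := by
  have hswap : ∀ u ∈ endpoints F, Equiv.swap v w u = u := fun u hu =>
    Equiv.swap_apply_of_ne_of_ne (ne_of_mem_of_not_mem hu hv) (ne_of_mem_of_not_mem hu hw)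
  intro f hf
  rw [permute_apply, Equiv.symm_swap, hswap _ (mem_union_left _ (mem_image_of_mem _ hf)), hC f hf,
    hswap _ (mem_union_right _ (mem_image_of_mem _ hf))]

/-- Once the chords of `F` are fixed, the partner of a further endpoint is uniform among at least
`2 * n - 1 - 2 * #F` free endpoints. -/
lemma real_cylinder_insert_le (hF : #F < n) (hne : e.1 ≠ e.2) (he : e ∉ F) (hs : e.swap ∉ F) :
    (uniform n).real (cylinder (insert e F)) ≤
      (uniform n).real (cylinder F) / (2 * n - 1 - 2 * #F) := by
  have hF' : (#F : ℝ) + 1 ≤ n := by exact_mod_cast hF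
  have hpos : (0 : ℝ) < 2 * n - 1 - 2 * #F := by linarith
  rw [cylinder_insert]
  obtain hempty | ⟨C₀, hC₀⟩ := {C ∈ cylinder F | C.1 e.1 = e.2}.eq_empty_or_nonempty
  · rw [hempty, measureReal_empty]
    positivity
  set V := (insert e.1 (endpoints F))ᶜ with hV
  have hVF : ∀ v ∈ V, v ∉ endpoints F := fun v hv h =>
    mem_compl.1 hv (mem_insert_of_mem h)
  have hcard : (2 * n - 1 - 2 * #F : ℝ) ≤ #V := by
    have hle := (card_insert_le e.1 (endpoints F)).trans
      (Nat.add_le_add_right (card_endpoints_le F) 1)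
    have hsum := card_add_card_compl (insert e.1 (endpoints F))
    rw [Fintype.card_fin, ← hV] at hsum
    have : (2 * n : ℝ) ≤ #V + 2 * #F + 1 := by
      exact_mod_cast (by omega : 2 * n ≤ #V + 2 * #F + 1)
    linarith
  have hfree : e.2 ∈ V := by
    rw [hV, mem_compl, mem_insert, not_or]
    exact ⟨hne.symm, snd_notMem_endpoints he hs hC₀.1 hC₀.2⟩
  rw [le_div_iff₀' hpos]
  calc _ ≤ #V * (uniform n).real {C ∈ cylinder F | C.1 e.1 = e.2} := by gcongr
    _ = (uniform n).real {C ∈ cylinder F | C.1 e.1 ∈ V} :=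
      card_mul_real_apply_eq (fun h => mem_compl.1 h (mem_insert_self _ _)) hfree
        fun v hv w hw _ hC => permute_swap_mem_cylinder (hVF v hv) (hVF w hw) hC
    _ ≤ _ := measureReal_mono fun C hC => hC.1

lemma IsOriented.real_cylinder_le (hF : IsOriented F) (hcard : #F ≤ n) :
    (uniform n).real (cylinder F) ≤ ∏ i ∈ range #F, (1 / (2 * n - 1 - 2 * i) : ℝ) := by
  induction F using Finset.induction_on with
  | empty => simp
  | insert e F he ih =>
    rw [card_insert_of_notMem he] at hcard ⊢
    have hpos : (0 : ℝ) < 2 * n - 1 - 2 * #F := by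
      have : (#F : ℝ) + 1 ≤ n := by exact_mod_cast hcard
      linarith
    rw [prod_range_succ, mul_one_div]
    refine (real_cylinder_insert_le hcard (hF.fst_ne_snd (mem_insert_self e F)) he fun h =>
      hF e (mem_insert_self e F) (mem_insert_of_mem h)).trans ?_
    gcongr
    exact ih (hF.mono (subset_insert e F)) (by omega)

lemma IsOriented.real_cylinder_le_pow (hF : IsOriented F) (hcard : 2 * #F ≤ n + 1)
    (hn : 0 < n) :
    (uniform n).real (cylinder F) ≤ (1 / n : ℝ) ^ #F := by
  refine (hF.real_cylinder_le (by omega)).trans ?_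
  rw [← card_range #F, ← prod_const, card_range]
  refine prod_le_prod (fun i hi => ?_) fun i hi => ?_ <;>
    have hi : (2 * (i + 1) : ℝ) ≤ n + 1 := by
      have := mem_range.1 hi
      exact_mod_cast (by omega : 2 * (i + 1) ≤ n + 1)
  · exact one_div_nonneg.2 (by linarith [(n.cast_nonneg : (0 : ℝ) ≤ n)])
  · exact one_div_le_one_div_of_le (by exact_mod_cast hn) (by linarith)

/-- The number of pairs in `E` that are chords of `C`. -/
def chordCount (E : Finset (Fin (2 * n) × Fin (2 * n))) (C : ChordDiagram n) : ℕ :=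
  #{e ∈ E | C.1 e.1 = e.2}

lemma mem_cylinder_singleton {C : ChordDiagram n} : C ∈ cylinder {e} ↔ C.1 e.1 = e.2 := by
  simp only [cylinder, mem_singleton, forall_eq, Set.mem_ofPred_eq]

lemma real_cylinder_singleton (he : e.1 ≠ e.2) :
    (uniform n).real (cylinder {e}) = 1 / (2 * n - 1) := by
  rw [← real_apply_eq he]
  exact congrArg _ (Set.ext fun C => mem_cylinder_singleton)

lemma chordCount_eq_sum_indicator (E : Finset (Fin (2 * n) × Fin (2 * n))) (C : ChordDiagram n) :
    (chordCount E C : ℝ) = ∑ e ∈ E, (cylinder {e}).indicator 1 C := by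
  simp only [chordCount, card_filter, Set.indicator_apply, mem_cylinder_singleton, Pi.one_apply,
    Nat.cast_sum, Nat.cast_ite, Nat.cast_one, Nat.cast_zero]

lemma IsOriented.integral_chordCount (hE : IsOriented E) :
    ∫ C, (chordCount E C : ℝ) ∂uniform n = #E / (2 * n - 1) := by
  simp only [chordCount_eq_sum_indicator]
  rw [integral_finsetSum _ fun _ _ => .of_finite,
    sum_congr rfl fun e he => (integral_indicator_one .of_discrete).trans
      (real_cylinder_singleton (hE.fst_ne_snd he)), sum_const, nsmul_eq_mul, mul_one_div]

lemma covariance_indicator_one {Ω : Type*} [MeasurableSpace Ω] {μ : Measure Ω}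
    [IsProbabilityMeasure μ] {s t : Set Ω} (hs : MeasurableSet s) (ht : MeasurableSet t) :
    cov[s.indicator 1, t.indicator 1; μ] = μ.real (s ∩ t) - μ.real s * μ.real t := by
  have hLp : ∀ {u : Set Ω}, MeasurableSet u → MemLp (u.indicator (1 : Ω → ℝ)) 2 μ := fun hu =>
    memLp_indicator_const 2 hu 1 (.inr (measure_ne_top μ _))
  rw [covariance_eq_sub (hLp hs) (hLp ht), ← Set.inter_indicator_one,
    integral_indicator_one (hs.inter ht), integral_indicator_one hs, integral_indicator_one ht]

lemma IsOriented.covariance_indicator_cylinder_le (hE : IsOriented E) (hn : 2 ≤ n) (he : e ∈ E)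
    (hf : f ∈ E) :
    cov[(cylinder {e}).indicator 1, (cylinder {f}).indicator 1; uniform n] ≤
      (if f = e then 1 / (2 * n - 1 : ℝ) else 0) + 2 / ((2 * n - 1) ^ 2 * (2 * n - 3)) := by
  have hn' : (2 : ℝ) ≤ n := by exact_mod_cast hn
  have h₁ : (0 : ℝ) < 2 * n - 1 := by linarith
  have h₃ : (0 : ℝ) < 2 * n - 3 := by linarith
  rw [covariance_indicator_one .of_discrete .of_discrete,
    real_cylinder_singleton (hE.fst_ne_snd he), real_cylinder_singleton (hE.fst_ne_snd hf)]
  split_ifs with hfe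
  · rw [hfe, Set.inter_self, real_cylinder_singleton (hE.fst_ne_snd he)]
    have : 0 ≤ 1 / (2 * n - 1 : ℝ) * (1 / (2 * n - 1)) := by positivity
    have : 0 ≤ 2 / ((2 * n - 1 : ℝ) ^ 2 * (2 * n - 3)) := by positivity
    linarith
  · have hpair : IsOriented {f, e} := hE.mono (insert_subset hf (singleton_subset_iff.2 he))
    have hcard : #{f, e} = 2 := card_pair hfe
    have hinter : cylinder {e} ∩ cylinder {f} = cylinder {f, e} := by
      ext C
      simp only [cylinder, mem_singleton, forall_eq, mem_insert, forall_eq_or_imp,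
        Set.mem_inter_iff, Set.mem_ofPred_eq, and_comm]
    have hle := hpair.real_cylinder_le (hcard.trans_le hn)
    rw [hcard, prod_range_succ, prod_range_one] at hle
    rw [hinter]
    refine (sub_le_sub_right hle _).trans_eq ?_
    push_cast
    rw [mul_zero, sub_zero, mul_one, show (2 * n - 1 - 2 : ℝ) = 2 * n - 3 by ring]
    field_simp
    ring

lemma IsOriented.variance_chordCount_le (hE : IsOriented E) (hn : 3 ≤ n) :
    Var[fun C => (chordCount E C : ℝ); uniform n] ≤ 3 * (#E / (2 * n - 1)) := by
  have hn' : (3 : ℝ) ≤ n := by exact_mod_cast hn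
  have h₁ : (0 : ℝ) < 2 * n - 1 := by linarith
  have h₃ : (0 : ℝ) < 2 * n - 3 := by linarith
  have hcard : (#E : ℝ) ≤ n * (2 * n - 1) := by
    have : ((2 * #E : ℕ) : ℝ) ≤ ((2 * n * (2 * n - 1) : ℕ) : ℝ) := by
      exact_mod_cast hE.two_mul_card_le
    push_cast [Nat.cast_sub (by omega : 1 ≤ 2 * n)] at this
    linarith
  simp only [chordCount_eq_sum_indicator]
  rw [variance_fun_sum' fun _ _ => .of_discrete]
  set c : ℝ := 2 / ((2 * n - 1) ^ 2 * (2 * n - 3)) with hc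
  have hcorr : #E * c ≤ 2 / (2 * n - 1) := calc
    #E * c ≤ n * (2 * n - 1) * c := by gcongr
    _ = 2 / (2 * n - 1) * (n / (2 * n - 3)) := by rw [hc]; field_simp
    _ ≤ 2 / (2 * n - 1) * 1 := by
      gcongr
      rw [div_le_one h₃]
      linarith
    _ = _ := mul_one _
  calc _ ≤ ∑ e ∈ E, ∑ f ∈ E, ((if f = e then 1 / (2 * n - 1 : ℝ) else 0) + c) :=
        sum_le_sum fun e he => sum_le_sum fun f hf =>
          hE.covariance_indicator_cylinder_le (by omega) he hf
    _ = ∑ e ∈ E, (1 / (2 * n - 1 : ℝ) + #E * c) := sum_congr rfl fun e he => by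
        rw [sum_add_distrib, sum_ite_eq' E e, if_pos he, sum_const, nsmul_eq_mul]
    _ ≤ ∑ e ∈ E, (1 / (2 * n - 1 : ℝ) + 2 / (2 * n - 1)) := by gcongr
    _ = _ := by rw [sum_const, nsmul_eq_mul]; ring

lemma IsOriented.real_le_abs_chordCount_sub_le (hE : IsOriented E) (hn : 3 ≤ n) {t : ℝ}
    (ht : 0 < t) :
    (uniform n).real {C | t ≤ |(chordCount E C : ℝ) - #E / (2 * n - 1)|} ≤
      3 * (#E / (2 * n - 1)) / t ^ 2 := by
  rw [← hE.integral_chordCount]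
  refine (ENNReal.toReal_le_of_le_ofReal (div_nonneg (variance_nonneg _ _) (sq_nonneg t))
    (meas_ge_le_variance_div_sq .of_discrete ht)).trans ?_
  rw [hE.integral_chordCount]
  gcongr
  exact hE.variance_chordCount_le hn

lemma IsOriented.real_chord_and_le_chordCount_le (hE : IsOriented E) (hne : e.1 ≠ e.2)
    (he : e ∉ E) (hs : e.swap ∉ E) {m : ℕ} (hm : 2 * (m + 1) ≤ n + 1) :
    (uniform n).real {C | C.1 e.1 = e.2 ∧ m ≤ chordCount E C} ≤
      (#E).choose m * (1 / n : ℝ) ^ (m + 1) := by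
  have hsub : {C : ChordDiagram n | C.1 e.1 = e.2 ∧ m ≤ chordCount E C} ⊆
      ⋃ F ∈ powersetCard m E, cylinder (insert e F) := by
    rintro C ⟨hCe, hCE⟩
    obtain ⟨F, hFE, hF⟩ := exists_subset_card_eq hCE
    refine Set.mem_biUnion (mem_powersetCard.2 ⟨hFE.trans (filter_subset _ _), hF⟩) ?_
    rw [cylinder_insert]
    exact ⟨fun f hf => (mem_filter.1 (hFE hf)).2, hCe⟩
  refine (measureReal_mono hsub (measure_ne_top _ _)).trans <|
    (measureReal_biUnion_finset_le _ _).trans ?_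
  rw [← card_powersetCard, ← nsmul_eq_mul]
  refine sum_le_card_nsmul _ _ _ fun F hF => ?_
  obtain ⟨hFE, hFm⟩ := mem_powersetCard.1 hF
  have hcard : #(insert e F) = m + 1 := by
    rw [card_insert_of_notMem fun h => he (hFE h), hFm]
  rw [← hcard]
  have hins : IsOriented (insert e F) := (hE.mono hFE).insert hne fun h => hs (hFE h)
  exact hins.real_cylinder_le_pow (hcard ▸ hm) (by omega)

end Cylinder

section Geometry

/-- The length of the potential chord joining `x` and `y`: the number of endpoints on the smaller
of the two arcs it determines. -/
def pairLength (x y : Fin (2 * n)) : ℕ :=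
  min (max (x : ℕ) y - min (x : ℕ) y - 1) (2 * n - (max (x : ℕ) y - min (x : ℕ) y) - 1)

lemma chordLength_eq_pairLength (C : ChordDiagram n) (x : Fin (2 * n)) :
    chordLength C x = pairLength x (C.1 x) := rfl

lemma pairLength_comm (x y : Fin (2 * n)) : pairLength x y = pairLength y x := by
  rw [pairLength, pairLength, max_comm, min_comm (x : ℕ)]

lemma chordLength_apply (C : ChordDiagram n) (x : Fin (2 * n)) :
    chordLength C (C.1 x) = chordLength C x := by
  rw [chordLength_eq_pairLength, C.involutive, pairLength_comm, chordLength_eq_pairLength]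

/-- The endpoints on the smaller of the two arcs between `x` and `y`. -/
def shortArc (x y : Fin (2 * n)) : Finset (Fin (2 * n)) :=
  if max (x : ℕ) y - min (x : ℕ) y ≤ n then Ioo (min x y) (max x y)
  else (Icc (min x y) (max x y))ᶜ

lemma mem_shortArc {x y u : Fin (2 * n)} : u ∈ shortArc x y ↔
    (max (x : ℕ) y - min (x : ℕ) y ≤ n ∧ min (x : ℕ) y < u ∧ (u : ℕ) < max (x : ℕ) y) ∨
      (n < max (x : ℕ) y - min (x : ℕ) y ∧ ((u : ℕ) < min (x : ℕ) y ∨ max (x : ℕ) y < u)) := by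
  rw [shortArc]
  split_ifs
  · simp only [mem_Ioo, min_lt_iff, lt_max_iff, Fin.lt_def]
    omega
  · simp only [mem_compl, mem_Icc, min_le_iff, le_max_iff, Fin.le_def]
    omega

lemma card_shortArc {x y : Fin (2 * n)} (h : x ≠ y) : #(shortArc x y) = pairLength x y := by
  have := x.2
  have := y.2
  have : (x : ℕ) ≠ y := Fin.val_ne_of_ne h
  have hmax : ((max x y : Fin (2 * n)) : ℕ) = max (x : ℕ) y := Fin.val_strictMono.monotone.map_max
  have hmin : ((min x y : Fin (2 * n)) : ℕ) = min (x : ℕ) y := Fin.val_strictMono.monotone.map_min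
  rw [shortArc, pairLength]
  split_ifs
  · rw [Fin.card_Ioo, hmax, hmin]
    omega
  · rw [card_compl, Fin.card_Icc, Fintype.card_fin, hmax, hmin]
    omega

lemma pairLength_lt_of_mem_shortArc {x y u v : Fin (2 * n)} (hu : u ∈ shortArc x y)
    (hv : v ∈ shortArc x y) : pairLength u v < pairLength x y := by
  rw [mem_shortArc] at hu hv
  unfold pairLength
  have := u.2
  have := v.2
  have := x.2
  have := y.2
  omega

lemma between_iff {m : ℕ} {a b c : Fin m} :
    Between a b c ↔ min (a : ℕ) b < c ∧ (c : ℕ) < max (a : ℕ) b := by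
  simp only [Between, min_lt_iff, lt_max_iff, Fin.lt_def]

lemma crosses_iff (C : ChordDiagram n) (x u : Fin (2 * n)) :
    Crosses C x u ↔ Xor (u ∈ shortArc x (C.1 x)) (C.1 u ∈ shortArc x (C.1 x)) := by
  have key : u = x ∨ u = C.1 x ∨ ((u : ℕ) ≠ x ∧ (u : ℕ) ≠ C.1 x ∧ (C.1 u : ℕ) ≠ x ∧
      (C.1 u : ℕ) ≠ C.1 x) := by
    simp only [ne_eq, Fin.val_inj, C.involutive.injective.eq_iff, C.involutive.eq_iff]
    tauto
  change Xor (Between x (C.1 x) u) (Between x (C.1 x) (C.1 u)) ↔ _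
  simp only [xor_def, between_iff, mem_shortArc]
  obtain rfl | rfl | ⟨h₁, h₂, h₃, h₄⟩ := key
  · omega
  · rw [C.involutive]
    omega
  · omega

lemma crosses_apply_iff {C : ChordDiagram n} {x u : Fin (2 * n)} :
    Crosses C x (C.1 u) ↔ Crosses C x u := by
  rw [crosses_iff, C.involutive, xor_comm, ← crosses_iff]

lemma degreeIn_le_chordLength (C : ChordDiagram n) (S : Finset (Fin (2 * n))) (x : Fin (2 * n)) :
    degreeIn C S x ≤ chordLength C x := by
  rw [chordLength_eq_pairLength, ← card_shortArc (C.apply_ne x).symm, degreeIn]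
  refine card_le_card_of_injOn (fun u => if u ∈ shortArc x (C.1 x) then u else C.1 u)
    (fun u hu => ?_) fun u hu v hv huv => ?_
  · have hcross := (crosses_iff C x u).1 (mem_filter.1 hu).2.2
    simp only [mem_coe]
    split_ifs with h
    · exact h
    · exact (hcross.resolve_left fun h' => h h'.1).1
  · have hu := (mem_filter.1 hu).2.1
    have hv := (mem_filter.1 hv).2.1
    simp only at huv
    split_ifs at huv
    · exact huv
    · rw [huv, C.involutive] at hu
      exact absurd hu hv.not_gt
    · rw [← huv, C.involutive] at hv
      exact absurd hv hu.not_gt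
    · exact C.involutive.injective huv

lemma card_le_degreeIn {C : ChordDiagram n} {S T : Finset (Fin (2 * n))} {x : Fin (2 * n)}
    (hS : ∀ u ∈ S, C.1 u ∈ S) (hTS : T ⊆ S) (hT : ∀ u ∈ T, C.1 u ∉ T)
    (hcross : ∀ u ∈ T, Crosses C x u) : #T ≤ degreeIn C S x := by
  refine card_le_card_of_injOn (fun u => if u < C.1 u then u else C.1 u)
    (fun u hu => ?_) fun u hu v hv huv => ?_
  · simp only [coe_filter, Set.mem_ofPred_eq]
    split_ifs with h
    · exact ⟨hTS hu, h, hcross u hu⟩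
    · rw [C.involutive]
      exact ⟨hS u (hTS hu), (not_lt.1 h).lt_of_ne (C.apply_ne u), crosses_apply_iff.2 (hcross u hu)⟩
  · simp only at huv
    split_ifs at huv
    · exact huv
    · exact absurd (huv ▸ hu) (hT v hv)
    · exact absurd (huv ▸ hv) (hT u hu)
    · exact C.involutive.injective huv

lemma card_filter_lt_apply (C : ChordDiagram n) : #{x | x < C.1 x} = n := by
  have hswap : #{x | x < C.1 x} = #{x | ¬ x < C.1 x} := by
    refine card_nbij' C.1 C.1 (fun x hx => ?_) (fun x hx => ?_) (fun x _ => C.involutive x)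
      fun x _ => C.involutive x <;>
      simp only [coe_filter, mem_univ, true_and, Set.mem_ofPred_eq, C.involutive x] at hx ⊢
    · exact hx.not_gt
    · exact (not_lt.1 hx).lt_of_ne (C.apply_ne x)
  have hsum := card_filter_add_card_filter_not (s := univ) (fun x : Fin (2 * n) => x < C.1 x)
  rw [← hswap, card_univ, Fintype.card_fin] at hsum
  omega

lemma kCoreSize_add_shortCount_le (k : ℕ) (C : ChordDiagram n) :
    kCoreSize n k C + shortCount n k C ≤ n := by
  conv_rhs => rw [← card_filter_lt_apply C]
  rw [kCoreSize, shortCount, ← card_union_of_disjoint]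
  · refine card_le_card fun x hx => ?_
    simp only [mem_union, mem_filter, mem_univ, true_and] at hx ⊢
    exact hx.elim And.right And.left
  · refine disjoint_left.2 fun x hx hx' => ?_
    simp only [kCore, mem_filter, mem_univ, true_and] at hx hx'
    obtain ⟨⟨S, hS, hxS⟩, -⟩ := hx
    exact hx'.2.not_ge ((hS.2 x hxS).trans (degreeIn_le_chordLength C S x))

lemma le_kCoreSize_add_shortCount {k r : ℕ} {C : ChordDiagram n}
    (h : IsCore C k (lenAtLeast n r C)) : n ≤ kCoreSize n k C + shortCount n r C := by
  conv_lhs => rw [← card_filter_lt_apply C]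
  rw [kCoreSize, shortCount]
  refine (card_le_card fun x hx => ?_).trans (card_union_le _ _)
  simp only [kCore, mem_union, mem_filter, mem_univ, true_and] at hx ⊢
  obtain hlt | hge := lt_or_ge (chordLength C x) r
  · exact .inr ⟨hx, hlt⟩
  · exact .inl ⟨⟨_, h, mem_filter.2 ⟨mem_univ x, hge⟩⟩, hx⟩

lemma card_pairLength_eq_le_two (x : Fin (2 * n)) (l : ℕ) :
    #{y | y ≠ x ∧ pairLength x y = l} ≤ 2 := by
  refine (card_le_card_of_injOn (t := {l + 1, 2 * n - l - 1})
    (fun y : Fin (2 * n) => if (x : ℕ) ≤ y then (y : ℕ) - x else y + 2 * n - x)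
    (fun y hy => ?_) fun y _ z _ h => ?_).trans card_le_two
  · have hx := x.2
    have hy2 := y.2
    simp only [coe_filter, mem_univ, true_and, Set.mem_ofPred_eq, pairLength, ne_eq,
      Fin.ext_iff] at hy
    simp only [coe_insert, coe_singleton, Set.mem_insert_iff, Set.mem_singleton_iff]
    split_ifs <;> omega
  · have hx := x.2
    have hy := y.2
    have hz := z.2
    simp only at h
    apply Fin.ext
    split_ifs at h <;> omega

lemma card_pairLength_le_le (x : Fin (2 * n)) (l : ℕ) :
    #{y | y ≠ x ∧ pairLength x y ≤ l} ≤ 2 * (l + 1) := by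
  refine (card_le_mul_card_image_of_maps_to (f := pairLength x) (t := range (l + 1))
    (fun y hy => mem_range_succ_iff.2 (mem_filter.1 hy).2.2) 2 fun m _ => ?_).trans_eq
    (by rw [card_range])
  rw [filter_filter]
  refine (card_le_card fun y hy => ?_).trans (card_pairLength_eq_le_two x m)
  simp only [mem_filter] at hy ⊢
  exact ⟨hy.1, hy.2.1.1, hy.2.2⟩

end Geometry

section ShortChords

/-- The increasing pairs of endpoints whose chord has length less than `r`. -/
def shortPairs (n r : ℕ) : Finset (Fin (2 * n) × Fin (2 * n)) :=
  {e | e.1 < e.2 ∧ pairLength e.1 e.2 < r}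

lemma isOriented_shortPairs (n r : ℕ) : IsOriented (shortPairs n r) := fun _ he he' =>
  (mem_filter.1 he).2.1.asymm (mem_filter.1 he').2.1

lemma chordCount_shortPairs (r : ℕ) (C : ChordDiagram n) :
    chordCount (shortPairs n r) C = shortCount n r C := by
  refine card_nbij' Prod.fst (fun x => (x, C.1 x)) ?_ ?_ ?_ ?_
  · rintro ⟨x, y⟩ h
    simp only [shortPairs, coe_filter, mem_filter, mem_univ, true_and, Set.mem_ofPred_eq] at h ⊢
    obtain ⟨h, rfl⟩ := h
    exact h
  · intro x h
    simp only [shortPairs, coe_filter, mem_filter, mem_univ, true_and, Set.mem_ofPred_eq,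
      and_true] at h ⊢
    exact h
  · rintro ⟨x, y⟩ h
    exact Prod.ext rfl (mem_filter.1 h).2
  · exact fun x _ => rfl

/-- The pair joining `p.1` to the endpoint `p.2 + 1` steps clockwise from it, in increasing
order. -/
def stepPair {r : ℕ} (h : r < n) (p : Fin (2 * n) × Fin r) : Fin (2 * n) × Fin (2 * n) :=
  if hp : (p.1 : ℕ) + p.2 + 1 < 2 * n then (p.1, ⟨p.1 + p.2 + 1, hp⟩)
  else (⟨p.1 + p.2 + 1 - 2 * n, by omega⟩, p.1)

lemma card_shortPairs {r : ℕ} (h : r < n) : #(shortPairs n r) = 2 * n * r := by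
  have hcard : #(univ : Finset (Fin (2 * n) × Fin r)) = 2 * n * r := by
    rw [card_univ, Fintype.card_prod, Fintype.card_fin, Fintype.card_fin]
  rw [← hcard]
  refine (card_nbij (stepPair h) ?_ ?_ ?_).symm
  · rintro ⟨u, d⟩ -
    refine mem_filter.2 ⟨mem_univ _, ?_⟩
    simp only [stepPair, pairLength, Fin.lt_def]
    split_ifs <;> dsimp only <;> omega
  · rintro ⟨u, d⟩ - ⟨u', d'⟩ - huv
    simp only [stepPair] at huv
    split_ifs at huv <;> simp only [Prod.mk.injEq, Fin.ext_iff] at huv ⊢ <;> omega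
  · rintro ⟨u, v⟩ he
    simp only [shortPairs, pairLength, coe_filter, mem_univ, true_and, Set.mem_ofPred_eq,
      Fin.lt_def] at he
    obtain hd | hd := le_or_gt ((v : ℕ) - u) r
    · refine ⟨(u, ⟨v - u - 1, by omega⟩), mem_univ _, ?_⟩
      rw [stepPair, dif_pos (by dsimp only; omega)]
      simp only [Prod.mk.injEq, Fin.ext_iff, true_and]
      omega
    · refine ⟨(v, ⟨u + 2 * n - v - 1, by omega⟩), mem_univ _, ?_⟩
      rw [stepPair, dif_neg (by dsimp only; omega)]
      simp only [Prod.mk.injEq, Fin.ext_iff, and_true]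
      omega

lemma real_le_abs_shortCount_sub_le {r : ℕ} (hn : 3 ≤ n) (hr : r < n) {c : ℝ} (hc : 0 < c)
    (hcr : 2 ≤ c * r) :
    (uniform n).real {C | c * r ≤ |(shortCount n r C : ℝ) - r|} ≤ 24 / (c ^ 2 * r) := by
  have hr0 : (0 : ℝ) < r := pos_of_mul_pos_right (by linarith) hc.le
  have hrn : (r : ℝ) ≤ n := by exact_mod_cast hr.le
  have hn' : (3 : ℝ) ≤ n := by exact_mod_cast hn
  have h₁ : (0 : ℝ) < 2 * n - 1 := by linarith
  have hmean : (#(shortPairs n r) / (2 * n - 1) : ℝ) = r + r / (2 * n - 1) := by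
    rw [card_shortPairs hr]
    push_cast
    field_simp
    ring
  have hle : (r / (2 * n - 1) : ℝ) ≤ 1 := (div_le_one h₁).2 (by linarith)
  have hle' : (r / (2 * n - 1) : ℝ) ≤ r := div_le_self hr0.le (by linarith)
  have hsub : {C : ChordDiagram n | c * r ≤ |(shortCount n r C : ℝ) - r|} ⊆
      {C | c * r / 2 ≤
        |(chordCount (shortPairs n r) C : ℝ) - #(shortPairs n r) / (2 * n - 1)|} := by
    intro C hC
    rw [Set.mem_ofPred_eq] at hC ⊢
    rw [chordCount_shortPairs, hmean]
    have hdrift : |(r / (2 * n - 1) : ℝ)| ≤ 1 := by rwa [abs_of_pos (by positivity)]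
    have htri := abs_add_le ((shortCount n r C : ℝ) - (r + r / (2 * n - 1))) (r / (2 * n - 1))
    rw [show (shortCount n r C : ℝ) - (r + r / (2 * n - 1)) + r / (2 * n - 1) =
      shortCount n r C - r by ring] at htri
    linarith
  calc _ ≤ 3 * (#(shortPairs n r) / (2 * n - 1)) / (c * r / 2) ^ 2 :=
        (measureReal_mono hsub (measure_ne_top _ _)).trans <|
          (isOriented_shortPairs n r).real_le_abs_chordCount_sub_le hn (by positivity)
    _ ≤ 3 * (r + r) / (c * r / 2) ^ 2 := by rw [hmean]; gcongr
    _ = 24 / (c ^ 2 * r) := by field_simp; norm_num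

lemma tendsto_real_le_abs_shortCount_sub {r : ℕ → ℕ} (hr : Tendsto r atTop atTop)
    (hrn : ∀ᶠ n in atTop, r n < n) {c : ℝ} (hc : 0 < c) :
    Tendsto (fun n => (uniform n).real {C | c * r n ≤ |(shortCount n (r n) C : ℝ) - r n|})
      atTop (nhds 0) := by
  have hr' : Tendsto (fun n => (r n : ℝ)) atTop atTop := tendsto_natCast_atTop_atTop.comp hr
  refine squeeze_zero' (.of_forall fun _ => measureReal_nonneg) ?_
    (tendsto_const_nhds.div_atTop (hr'.const_mul_atTop (pow_pos hc 2)) (a := 24))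
  filter_upwards [eventually_ge_atTop 3, hrn,
    (hr'.const_mul_atTop hc).eventually_ge_atTop 2] with n hn hr hcr
  exact real_le_abs_shortCount_sub_le hn hr hc hcr

end ShortChords

section MediumChords

/-- The pairs with first entry on the small arc between `x` and `y` that are no longer than
`(x, y)`; a pair with both entries on the arc is listed in increasing order only. -/
def nearPairs (x y : Fin (2 * n)) : Finset (Fin (2 * n) × Fin (2 * n)) :=
  {e | e.1 ∈ shortArc x y ∧ e.2 ≠ e.1 ∧ pairLength e.1 e.2 ≤ pairLength x y ∧
    (e.2 ∈ shortArc x y → e.1 < e.2)}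

lemma mem_nearPairs {x y u v : Fin (2 * n)} : (u, v) ∈ nearPairs x y ↔ u ∈ shortArc x y ∧ v ≠ u ∧
    pairLength u v ≤ pairLength x y ∧ (v ∈ shortArc x y → u < v) := by
  simp only [nearPairs, mem_filter, mem_univ, true_and]

lemma isOriented_nearPairs (x y : Fin (2 * n)) : IsOriented (nearPairs x y) := by
  rintro ⟨u, v⟩ huv hvu
  obtain ⟨hu, -, -, hlt⟩ := mem_nearPairs.1 huv
  obtain ⟨hv, -, -, hlt'⟩ := mem_nearPairs.1 hvu
  exact (hlt hv).asymm (hlt' hu)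

lemma card_nearPairs_le {x y : Fin (2 * n)} (hxy : x ≠ y) :
    #(nearPairs x y) ≤ 4 * pairLength x y ^ 2 := by
  have hfibre : ∀ u ∈ shortArc x y, #{e ∈ nearPairs x y | e.1 = u} ≤ 2 * (pairLength x y + 1) := by
    refine fun u _ => (card_le_card_of_injOn Prod.snd ?_ ?_).trans
      (card_pairLength_le_le u (pairLength x y))
    · rintro ⟨a, b⟩ h
      obtain ⟨hab, rfl⟩ := mem_filter.1 h
      exact mem_filter.2 ⟨mem_univ b, (mem_nearPairs.1 hab).2.1, (mem_nearPairs.1 hab).2.2.1⟩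
    · exact fun e he f hf hef =>
        Prod.ext ((mem_filter.1 he).2.trans (mem_filter.1 hf).2.symm) hef
  have hcard := card_le_mul_card_image_of_maps_to
    (fun e he => (mem_nearPairs.1 he).1) _ hfibre
  rw [card_shortArc hxy] at hcard
  nlinarith [Nat.le_self_pow two_ne_zero (pairLength x y)]

lemma left_notMem_shortArc (x y : Fin (2 * n)) : x ∉ shortArc x y := by
  rw [mem_shortArc]
  omega

lemma right_notMem_shortArc (x y : Fin (2 * n)) : y ∉ shortArc x y := by
  rw [mem_shortArc]
  omega

lemma card_filter_chordLength_le (C : ChordDiagram n) (x y : Fin (2 * n)) :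
    #{u ∈ shortArc x y | chordLength C u ≤ pairLength x y} ≤ 2 * chordCount (nearPairs x y) C := by
  set f : Fin (2 * n) → Fin (2 * n) × Fin (2 * n) := fun u =>
    if C.1 u ∈ shortArc x y ∧ C.1 u < u then (C.1 u, u) else (u, C.1 u) with hf
  refine card_le_mul_card_image_of_maps_to (f := f) (fun u hu => ?_) 2 fun e _ => ?_
  · obtain ⟨hu, hlen⟩ := mem_filter.1 hu
    rw [chordLength_eq_pairLength] at hlen
    simp only [hf, mem_filter]
    split_ifs with h
    · exact ⟨mem_nearPairs.2 ⟨h.1, (C.apply_ne u).symm, pairLength_comm u _ ▸ hlen, fun _ => h.2⟩,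
        C.involutive u⟩
    · exact ⟨mem_nearPairs.2 ⟨hu, C.apply_ne u, hlen, fun hCu =>
        (not_lt.1 fun hlt => h ⟨hCu, hlt⟩).lt_of_ne (C.apply_ne u).symm⟩, rfl⟩
  · refine (card_le_card (t := {e.1, e.2}) fun u hu => ?_).trans card_le_two
    rw [← (mem_filter.1 hu).2]
    simp only [hf]
    split_ifs <;> simp

/-- Endpoints on the short arc of a chord either lead out of the arc by a longer, hence crossing,
chord, or belong to a chord counted by `nearPairs`. -/
lemma chordLength_le_degreeIn_add {C : ChordDiagram n} {x : Fin (2 * n)} {r : ℕ}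
    (hr : r ≤ chordLength C x) : chordLength C x ≤
      degreeIn C (lenAtLeast n r C) x + 2 * chordCount (nearPairs x (C.1 x)) C := by
  conv_lhs => rw [chordLength_eq_pairLength, ← card_shortArc (C.apply_ne x).symm]
  rw [← card_filter_add_card_filter_not fun u => chordLength C u ≤ chordLength C x, add_comm]
  have hout : ∀ u ∈ shortArc x (C.1 x), ¬ chordLength C u ≤ chordLength C x →
      C.1 u ∉ shortArc x (C.1 x) := fun u hu hlen hCu =>
    hlen (pairLength_lt_of_mem_shortArc hu hCu).le
  refine Nat.add_le_add (card_le_degreeIn (fun u hu => ?_) (fun u hu => ?_) (fun u hu hu' => ?_)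
    fun u hu => ?_) (card_filter_chordLength_le C x (C.1 x))
  · rw [lenAtLeast, mem_filter, chordLength_apply]
    exact ⟨mem_univ _, (mem_filter.1 hu).2⟩
  · exact mem_filter.2 ⟨mem_univ u, hr.trans (not_le.1 (mem_filter.1 hu).2).le⟩
  · exact hout u (mem_filter.1 hu).1 (mem_filter.1 hu).2 (mem_filter.1 hu').1
  · obtain ⟨hu, hlen⟩ := mem_filter.1 hu
    exact (crosses_iff C x u).2 (.inl ⟨hu, hout u hu hlen⟩)

/-- The chord at `x` is deficient when at least a fraction `δ` of its short arc may be used up by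
chords no longer than itself. -/
def IsDeficient (δ : ℝ) (C : ChordDiagram n) (x : Fin (2 * n)) : Prop :=
  δ * chordLength C x ≤ 2 * chordCount (nearPairs x (C.1 x)) C

lemma le_degreeIn_of_not_isDeficient {δ : ℝ} {C : ChordDiagram n} {x : Fin (2 * n)} {r : ℕ}
    (hr : r ≤ chordLength C x) (hx : ¬ IsDeficient δ C x) :
    (1 - δ) * chordLength C x ≤ degreeIn C (lenAtLeast n r C) x := by
  have h : (chordLength C x : ℝ) ≤ degreeIn C (lenAtLeast n r C) x +
      2 * chordCount (nearPairs x (C.1 x)) C := by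
    exact_mod_cast chordLength_le_degreeIn_add hr
  rw [IsDeficient, not_le] at hx
  linarith

lemma choose_mul_pow_le (N m : ℕ) {p : ℝ} (hp : 0 ≤ p) :
    N.choose m * p ^ m ≤ (Real.exp 1 * N * p / m) ^ m := by
  obtain rfl | hm := m.eq_zero_or_pos
  · simp
  have hfact : (m : ℝ) ^ m / m.factorial ≤ Real.exp 1 ^ m := by
    rw [← Real.exp_nat_mul, mul_one]
    exact Real.pow_div_factorial_le_exp m m.cast_nonneg m
  calc N.choose m * p ^ m ≤ N ^ m / m.factorial * p ^ m := by
        gcongr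
        exact Nat.choose_le_pow_div m N
    _ = m ^ m / m.factorial * ((N * p) ^ m / m ^ m) := by rw [mul_pow]; field_simp
    _ ≤ Real.exp 1 ^ m * ((N * p) ^ m / m ^ m) := by gcongr
    _ = _ := by rw [div_pow, mul_assoc, mul_pow (Real.exp 1), mul_div_assoc]

lemma choose_mul_one_div_pow_le {δ : ℝ} (hδ : 0 < δ) {l N : ℕ} (hl : 0 < l) (hN : N ≤ 4 * l ^ 2)
    (hln : 16 * Real.exp 1 * l ≤ δ * n) :
    N.choose ⌈δ * l / 2⌉₊ * (1 / n : ℝ) ^ ⌈δ * l / 2⌉₊ ≤ ((1 / 2 : ℝ) ^ (δ / 2)) ^ l := by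
  set m := ⌈δ * l / 2⌉₊
  have hm : δ * l / 2 ≤ m := Nat.le_ceil _
  have : (0 : ℝ) < l := by exact_mod_cast hl
  have hN' : (N : ℝ) ≤ 4 * l ^ 2 := by exact_mod_cast hN
  have hn : (0 : ℝ) < n := pos_of_mul_pos_right (lt_of_lt_of_le (by positivity) hln) hδ.le
  have hbase : Real.exp 1 * N * (1 / n) / m ≤ 1 / 2 := calc
    _ ≤ Real.exp 1 * (4 * l ^ 2) * (1 / n) / (δ * l / 2) := by gcongr
    _ = 16 * Real.exp 1 * l / (δ * n) / 2 := by field_simp; norm_num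
    _ ≤ 1 / 2 := by
      gcongr
      exact (div_le_one (by positivity)).2 hln
  calc _ ≤ (Real.exp 1 * N * (1 / n) / m) ^ m := choose_mul_pow_le N m (by positivity)
    _ ≤ (1 / 2 : ℝ) ^ m := by gcongr
    _ = (1 / 2 : ℝ) ^ (m : ℝ) := (Real.rpow_natCast _ _).symm
    _ ≤ (1 / 2 : ℝ) ^ (δ / 2 * l) :=
      Real.rpow_le_rpow_of_exponent_ge (by norm_num) (by norm_num) (by linarith)
    _ = _ := Real.rpow_mul_natCast (by norm_num) _ _

lemma real_chord_and_isDeficient_le {δ : ℝ} (hδ : 0 < δ) (hδ1 : δ ≤ 1) {x y : Fin (2 * n)}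
    (hxy : x ≠ y) (hl : 0 < pairLength x y)
    (hln : 16 * Real.exp 1 * pairLength x y ≤ δ * n) :
    (uniform n).real {C | C.1 x = y ∧ IsDeficient δ C x} ≤
      ((1 / 2 : ℝ) ^ (δ / 2)) ^ pairLength x y * (1 / n) := by
  set l := pairLength x y
  set m := ⌈δ * l / 2⌉₊
  have hm : 2 * (m + 1) ≤ n + 1 := by
    have hceil : (m : ℝ) < δ * l / 2 + 1 := Nat.ceil_lt_add_one (by positivity)
    have hexp := Real.add_one_le_exp (1 : ℝ)
    have hl1 : (1 : ℝ) ≤ l := by exact_mod_cast hl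
    have : (2 * (m + 1) : ℝ) ≤ n + 1 := by nlinarith
    exact_mod_cast this
  have hsub : {C : ChordDiagram n | C.1 x = y ∧ IsDeficient δ C x} ⊆
      {C | C.1 x = y ∧ m ≤ chordCount (nearPairs x y) C} := by
    rintro C ⟨rfl, hdef⟩
    rw [IsDeficient, chordLength_eq_pairLength] at hdef
    exact ⟨rfl, Nat.ceil_le.2 (by linarith)⟩
  refine (measureReal_mono hsub (measure_ne_top _ _)).trans <|
    ((isOriented_nearPairs x y).real_chord_and_le_chordCount_le (e := (x, y)) hxy
      (fun h => left_notMem_shortArc x y (mem_nearPairs.1 h).1)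
      (fun h => right_notMem_shortArc x y (mem_nearPairs.1 h).1) hm).trans ?_
  rw [pow_succ, ← mul_assoc]
  gcongr
  exact choose_mul_one_div_pow_le hδ hl (card_nearPairs_le hxy) hln

lemma real_chordLength_eq_and_isDeficient_le {δ : ℝ} (hδ : 0 < δ) (hδ1 : δ ≤ 1) {l : ℕ}
    (hl : 0 < l) (hln : 16 * Real.exp 1 * l ≤ δ * n) (x : Fin (2 * n)) :
    (uniform n).real {C | chordLength C x = l ∧ IsDeficient δ C x} ≤
      2 * (((1 / 2 : ℝ) ^ (δ / 2)) ^ l * (1 / n)) := by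
  have hsub : {C : ChordDiagram n | chordLength C x = l ∧ IsDeficient δ C x} ⊆
      ⋃ y ∈ ({y | y ≠ x ∧ pairLength x y = l} : Finset _), {C | C.1 x = y ∧ IsDeficient δ C x} :=
    fun C hC => Set.mem_biUnion (x := C.1 x)
      (mem_filter.2 ⟨mem_univ _, C.apply_ne x, hC.1⟩) ⟨rfl, hC.2⟩
  refine (measureReal_mono hsub (measure_ne_top _ _)).trans <|
    (measureReal_biUnion_finset_le _ _).trans <|
      (sum_le_card_nsmul _ _ (((1 / 2 : ℝ) ^ (δ / 2)) ^ l * (1 / n)) fun y hy => ?_).trans ?_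
  · obtain ⟨hyx, rfl⟩ := (mem_filter.1 hy).2
    exact real_chord_and_isDeficient_le hδ hδ1 hyx.symm hl hln
  · rw [nsmul_eq_mul]
    gcongr
    exact_mod_cast card_pairLength_eq_le_two x l

lemma real_exists_isDeficient_le {δ : ℝ} (hδ : 0 < δ) (hδ1 : δ ≤ 1) {r L : ℕ} (hr : 0 < r)
    (hL : 16 * Real.exp 1 * L ≤ δ * n) :
    (uniform n).real {C | ∃ x, r ≤ chordLength C x ∧ chordLength C x ≤ L ∧ IsDeficient δ C x} ≤
      4 * (((1 / 2 : ℝ) ^ (δ / 2)) ^ r / (1 - (1 / 2 : ℝ) ^ (δ / 2))) := by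
  set ρ : ℝ := (1 / 2 : ℝ) ^ (δ / 2)
  have hρ : 0 ≤ ρ := by positivity
  have hρ1 : ρ < 1 := Real.rpow_lt_one (by norm_num) (by norm_num) (by positivity)
  have hsub : {C : ChordDiagram n |
      ∃ x, r ≤ chordLength C x ∧ chordLength C x ≤ L ∧ IsDeficient δ C x} ⊆
      ⋃ x ∈ univ, ⋃ l ∈ Ico r (L + 1), {C | chordLength C x = l ∧ IsDeficient δ C x} := by
    rintro C ⟨x, hrx, hxL, hx⟩
    exact Set.mem_biUnion (mem_univ x) <|
      Set.mem_biUnion (mem_Ico.2 ⟨hrx, Nat.lt_succ_of_le hxL⟩) ⟨rfl, hx⟩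
  calc _ ≤ ∑ x : Fin (2 * n), ∑ l ∈ Ico r (L + 1),
          (uniform n).real {C | chordLength C x = l ∧ IsDeficient δ C x} :=
        (measureReal_mono hsub (measure_ne_top _ _)).trans <|
          (measureReal_biUnion_finset_le _ _).trans <| sum_le_sum fun x _ =>
            measureReal_biUnion_finset_le _ _
    _ ≤ ∑ x : Fin (2 * n), ∑ l ∈ Ico r (L + 1), 2 * (ρ ^ l * (1 / n)) := by
        refine sum_le_sum fun x _ => sum_le_sum fun l hl => ?_
        obtain ⟨hrl, hlL⟩ := mem_Ico.1 hl
        refine real_chordLength_eq_and_isDeficient_le hδ hδ1 (by omega) (le_trans ?_ hL) x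
        gcongr
        omega
    _ = 2 * n * (1 / n) * 2 * ∑ l ∈ Ico r (L + 1), ρ ^ l := by
        rw [sum_const, card_univ, Fintype.card_fin, nsmul_eq_mul, ← mul_sum, ← sum_mul]
        push_cast
        ring
    _ ≤ 2 * 2 * (ρ ^ r / (1 - ρ)) := by
        gcongr
        · rw [mul_one_div, mul_div_assoc]
          exact mul_le_of_le_one_right two_pos.le (div_self_le_one _)
        · exact geom_sum_Ico_le_of_lt_one hρ hρ1
    _ = _ := by norm_num

end MediumChords

section LongChords

/-- The `i`-th of the consecutive blocks of `b` endpoints. -/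
def block (n b i : ℕ) : Finset (Fin (2 * n)) := {u | (u : ℕ) / b = i}

lemma mem_block {b i : ℕ} (hb : 0 < b) {u : Fin (2 * n)} :
    u ∈ block n b i ↔ i * b ≤ u ∧ (u : ℕ) < (i + 1) * b := by
  rw [block, mem_filter, Nat.div_eq_iff hb, add_one_mul]
  simp only [mem_univ, true_and]
  omega

lemma card_block {b i : ℕ} (hb : 0 < b) (hi : i < 2 * n / b) : #(block n b i) = b := by
  have hmap : (block n b i).map Fin.valEmbedding = Ico (i * b) ((i + 1) * b) := by
    ext c
    simp only [Finset.mem_map, mem_block hb, Fin.valEmbedding_apply, mem_Ico]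
    refine ⟨fun ⟨_, hu, huc⟩ => huc ▸ hu, fun hc => ⟨⟨c, hc.2.trans_le ?_⟩, hc, rfl⟩⟩
    exact (Nat.le_div_iff_mul_le hb).1 hi
  rw [← card_map Fin.valEmbedding, hmap, Nat.card_Ico, add_one_mul, Nat.add_sub_cancel_left]

lemma isOriented_block_product {b i j : ℕ} (hij : i ≠ j) :
    IsOriented (block n b i ×ˢ block n b j) := fun _ he he' =>
  hij <| (mem_filter.1 (mem_product.1 he).1).2.symm.trans
    (mem_filter.1 (mem_product.1 he').2).2

lemma real_chordCount_block_product_lt_le {b i j : ℕ} (hn : 3 ≤ n) (hb : 0 < b)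
    (hi : i < 2 * n / b) (hj : j < 2 * n / b) (hij : i ≠ j) :
    (uniform n).real {C | (chordCount (block n b i ×ˢ block n b j) C : ℝ) < b ^ 2 / (4 * n)} ≤
      24 * n / b ^ 2 := by
  have hn' : (3 : ℝ) ≤ n := by exact_mod_cast hn
  have : (0 : ℝ) < b := by exact_mod_cast hb
  have h₁ : (0 : ℝ) < 2 * n - 1 := by linarith
  have hmean : (#(block n b i ×ˢ block n b j) / (2 * n - 1) : ℝ) = b ^ 2 / (2 * n - 1) := by
    rw [card_product, card_block hb hi, card_block hb hj, Nat.cast_mul, sq]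
  set μ : ℝ := b ^ 2 / (2 * n - 1) with hμ
  have hμ0 : 0 < μ := by positivity
  have hμ_ge : (b ^ 2 / (4 * n) : ℝ) ≤ μ / 2 := by
    rw [hμ, div_div]
    exact div_le_div_of_nonneg_left (by positivity) (by positivity) (by linarith)
  have hsub : {C : ChordDiagram n |
      (chordCount (block n b i ×ˢ block n b j) C : ℝ) < b ^ 2 / (4 * n)} ⊆
      {C | μ / 2 ≤ |(chordCount (block n b i ×ˢ block n b j) C : ℝ) -
        #(block n b i ×ˢ block n b j) / (2 * n - 1)|} := by
    intro C hC
    rw [Set.mem_ofPred_eq] at hC ⊢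
    rw [hmean, abs_sub_comm]
    exact le_trans (by linarith) (le_abs_self _)
  calc _ ≤ 3 * (#(block n b i ×ˢ block n b j) / (2 * n - 1)) / (μ / 2) ^ 2 :=
        (measureReal_mono hsub (measure_ne_top _ _)).trans <|
          (isOriented_block_product hij).real_le_abs_chordCount_sub_le hn (half_pos hμ0)
    _ = 12 * (2 * n - 1) / b ^ 2 := by rw [hmean, hμ]; field_simp; norm_num
    _ ≤ 24 * n / b ^ 2 := div_le_div_of_nonneg_right (by linarith) (by positivity)

/-- Some two distinct blocks of `b` endpoints are joined by fewer than `b ^ 2 / (4 * n)` chords,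
about half the expected number. -/
def HasSparseBlocks (b : ℕ) (C : ChordDiagram n) : Prop :=
  ∃ i < 2 * n / b, ∃ j < 2 * n / b, i ≠ j ∧
    (chordCount (block n b i ×ˢ block n b j) C : ℝ) < b ^ 2 / (4 * n)

lemma real_hasSparseBlocks_le {b : ℕ} (hn : 3 ≤ n) (hb : 0 < b) :
    (uniform n).real {C | HasSparseBlocks b C} ≤ 96 * n ^ 3 / b ^ 4 := by
  have hsub : {C : ChordDiagram n | HasSparseBlocks b C} ⊆
      ⋃ p ∈ (range (2 * n / b)).offDiag,
        {C | (chordCount (block n b p.1 ×ˢ block n b p.2) C : ℝ) < b ^ 2 / (4 * n)} := by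
    rintro C ⟨i, hi, j, hj, hij, hlt⟩
    exact Set.mem_biUnion (x := (i, j))
      (mem_offDiag.2 ⟨mem_range.2 hi, mem_range.2 hj, hij⟩) hlt
  have hcard : (#(range (2 * n / b)).offDiag : ℝ) ≤ (2 * n / b) ^ 2 := by
    rw [offDiag_card, card_range, ← sq]
    calc (((2 * n / b) ^ 2 - 2 * n / b : ℕ) : ℝ) ≤ ((2 * n / b : ℕ) : ℝ) ^ 2 := by
          exact_mod_cast Nat.sub_le _ _
      _ ≤ (2 * n / b) ^ 2 := by
          gcongr
          exact_mod_cast (Nat.cast_div_le : ((2 * n / b : ℕ) : ℝ) ≤ _)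
  calc _ ≤ #(range (2 * n / b)).offDiag • (24 * n / b ^ 2 : ℝ) :=
        (measureReal_mono hsub (measure_ne_top _ _)).trans <|
          (measureReal_biUnion_finset_le _ _).trans <| sum_le_card_nsmul _ _ _ fun p hp => by
            obtain ⟨hi, hj, hij⟩ := mem_offDiag.1 hp
            exact real_chordCount_block_product_lt_le hn hb (mem_range.1 hi) (mem_range.1 hj) hij
    _ ≤ (2 * n / b) ^ 2 * (24 * n / b ^ 2) := by
        rw [nsmul_eq_mul]
        gcongr
    _ = _ := by field_simp; norm_num

lemma exists_mul_mem_Icc {b s e : ℕ} (hb : 0 < b) (h : s + 2 * b ≤ e) :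
    ∃ i, s ≤ i * b ∧ (i + 1) * b ≤ e := by
  refine ⟨s / b + 1, ?_, ?_⟩
  · exact (Nat.lt_mul_of_div_lt (Nat.lt_succ_self _) hb).le
  · have := Nat.div_mul_le_self s b
    rw [add_mul, add_mul]
    omega

/-- One block is taken well inside the arc between the two endpoints and one outside it; a chord
joining them crosses the given chord and, the inner block being `b` away from the endpoints, has
length at least `b`. -/
lemma exists_block_crosses {b : ℕ} (hb : 0 < b) {C : ChordDiagram n} {x : Fin (2 * n)}
    (hx : 4 * b ≤ chordLength C x) :
    ∃ i < 2 * n / b, ∃ j < 2 * n / b, i ≠ j ∧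
      ∀ u ∈ block n b i, C.1 u ∈ block n b j → Crosses C x u ∧ b ≤ chordLength C u := by
  rw [chordLength_eq_pairLength, pairLength] at hx
  have hlt_div : ∀ {i}, (i + 1) * b ≤ 2 * n → i < 2 * n / b := fun h =>
    (Nat.le_div_iff_mul_le hb).2 h
  set lo := min (x : ℕ) (C.1 x)
  set hi := max (x : ℕ) (C.1 x)
  have hhi_lt : hi < 2 * n := max_lt x.2 (C.1 x).2
  obtain ⟨i, hi₁, hi₂⟩ : ∃ i, lo + 1 + b ≤ i * b ∧ (i + 1) * b ≤ hi - b :=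
    exists_mul_mem_Icc hb (by omega)
  obtain ⟨j, hj₁, hj₂⟩ : ∃ j, (j + 1) * b ≤ 2 * n ∧ ((j + 1) * b ≤ lo ∨ hi + 1 ≤ j * b) := by
    obtain hlo_ge | hlo_lt := le_or_gt (2 * b) lo
    · obtain ⟨j, -, hj⟩ := exists_mul_mem_Icc hb ((zero_add _).trans_le hlo_ge)
      exact ⟨j, by omega, .inl hj⟩
    · obtain ⟨j, hj, hj'⟩ := exists_mul_mem_Icc (s := hi + 1) (e := 2 * n) hb (by omega)
      exact ⟨j, hj', .inr hj⟩
  refine ⟨i, hlt_div (by omega), j, hlt_div hj₁, ?_, fun u hu hCu => ?_⟩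
  · rintro rfl
    rw [add_one_mul] at hj₂ hi₂
    omega
  · rw [mem_block hb] at hu hCu
    refine ⟨.inl ⟨between_iff.2 (by omega), fun h => ?_⟩, ?_⟩
    · have := between_iff.1 h
      omega
    · rw [chordLength_eq_pairLength, pairLength]
      omega

lemma chordCount_block_product_le_degreeIn {b i j r : ℕ} (hij : i ≠ j) {C : ChordDiagram n}
    {x : Fin (2 * n)} (h : ∀ u ∈ block n b i, C.1 u ∈ block n b j →
      Crosses C x u ∧ r ≤ chordLength C u) :
    chordCount (block n b i ×ˢ block n b j) C ≤ degreeIn C (lenAtLeast n r C) x := by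
  calc chordCount (block n b i ×ˢ block n b j) C ≤ #{u ∈ block n b i | C.1 u ∈ block n b j} := by
        refine card_le_card_of_injOn Prod.fst (fun e he => ?_) fun e he f hf hef => ?_
        · obtain ⟨he, hCe⟩ := mem_filter.1 he
          obtain ⟨he₁, he₂⟩ := mem_product.1 he
          exact mem_filter.2 ⟨he₁, hCe ▸ he₂⟩
        · exact Prod.ext hef <| by rw [← (mem_filter.1 he).2, hef, (mem_filter.1 hf).2]
    _ ≤ degreeIn C (lenAtLeast n r C) x := by
        refine card_le_degreeIn (fun u hu => ?_) (fun u hu => ?_) (fun u hu hu' => ?_)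
          fun u hu => ?_
        · rw [lenAtLeast, mem_filter, chordLength_apply]
          exact ⟨mem_univ _, (mem_filter.1 hu).2⟩
        · obtain ⟨hu, hCu⟩ := mem_filter.1 hu
          exact mem_filter.2 ⟨mem_univ u, (h u hu hCu).2⟩
        · exact hij ((mem_filter.1 (mem_filter.1 hu').1).2.symm.trans
            (mem_filter.1 (mem_filter.1 hu).2).2)
        · obtain ⟨hu, hCu⟩ := mem_filter.1 hu
          exact (h u hu hCu).1

lemma le_degreeIn_of_not_hasSparseBlocks {b r : ℕ} (hb : 0 < b) (hrb : r ≤ b)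
    {C : ChordDiagram n} (hC : ¬ HasSparseBlocks b C) {x : Fin (2 * n)}
    (hx : 4 * b ≤ chordLength C x) :
    (b ^ 2 / (4 * n) : ℝ) ≤ degreeIn C (lenAtLeast n r C) x := by
  obtain ⟨i, hi, j, hj, hij, hcross⟩ := exists_block_crosses hb hx
  have hcount : (b ^ 2 / (4 * n) : ℝ) ≤ chordCount (block n b i ×ˢ block n b j) C :=
    not_lt.1 fun h => hC ⟨i, hi, j, hj, hij, h⟩
  refine hcount.trans (Nat.cast_le.2 ?_)
  exact chordCount_block_product_le_degreeIn hij fun u hu hCu =>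
    ⟨(hcross u hu hCu).1, hrb.trans (hcross u hu hCu).2⟩

end LongChords

section Core

lemma isCore_lenAtLeast {δ : ℝ} {k r b : ℕ} {C : ChordDiagram n} (hb : 0 < b) (hrb : r ≤ b)
    (hkb : (k : ℝ) ≤ b ^ 2 / (4 * n)) (hδ : δ ≤ 1) (hkr : k ≤ (1 - δ) * r)
    (hmedium : ∀ x, r ≤ chordLength C x → chordLength C x ≤ 4 * b → ¬ IsDeficient δ C x)
    (hlong : ¬ HasSparseBlocks b C) : IsCore C k (lenAtLeast n r C) := by
  refine ⟨fun x hx => ?_, fun x hx => ?_⟩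
  · rw [lenAtLeast, mem_filter, chordLength_apply]
    exact ⟨mem_univ _, (mem_filter.1 hx).2⟩
  have hr : r ≤ chordLength C x := (mem_filter.1 hx).2
  rw [← Nat.cast_le (α := ℝ)]
  obtain hle | hlt := le_or_gt (chordLength C x) (4 * b)
  · calc (k : ℝ) ≤ (1 - δ) * r := hkr
      _ ≤ (1 - δ) * chordLength C x := by
        have := sub_nonneg.2 hδ
        gcongr
      _ ≤ _ := le_degreeIn_of_not_isDeficient hr (hmedium x hr hle)
  · exact hkb.trans (le_degreeIn_of_not_hasSparseBlocks hb hrb hlong hlt.le)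

lemma real_not_isCore_lenAtLeast_le {δ : ℝ} {k r b : ℕ} (hn : 3 ≤ n) (hr : 0 < r) (hrb : r ≤ b)
    (hkb : (k : ℝ) ≤ b ^ 2 / (4 * n)) (hδ : 0 < δ) (hδ1 : δ ≤ 1) (hkr : k ≤ (1 - δ) * r)
    (hbn : 64 * Real.exp 1 * b ≤ δ * n) :
    (uniform n).real {C | ¬ IsCore C k (lenAtLeast n r C)} ≤
      4 * (((1 / 2 : ℝ) ^ (δ / 2)) ^ r / (1 - (1 / 2 : ℝ) ^ (δ / 2))) + 96 * n ^ 3 / b ^ 4 := by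
  have hb : 0 < b := hr.trans_le hrb
  have hsub : {C : ChordDiagram n | ¬ IsCore C k (lenAtLeast n r C)} ⊆
      {C | ∃ x, r ≤ chordLength C x ∧ chordLength C x ≤ 4 * b ∧ IsDeficient δ C x} ∪
        {C | HasSparseBlocks b C} := by
    intro C hC
    by_contra h
    simp only [Set.mem_union, Set.mem_ofPred_eq, not_or, not_exists, not_and] at h
    exact hC (isCore_lenAtLeast hb hrb hkb hδ1 hkr h.1 h.2)
  refine (measureReal_mono hsub (measure_ne_top _ _)).trans <|
    (measureReal_union_le _ _).trans <| add_le_add ?_ (real_hasSparseBlocks_le hn hb)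
  refine real_exists_isDeficient_le hδ hδ1 hr ?_
  push_cast
  linarith

lemma real_not_isCore_lenAtLeast_le_div {δ c : ℝ} {k r : ℕ} (hn : 3 ≤ n) (hr : 0 < r)
    (hδ : 0 < δ) (hδ1 : δ ≤ 1) (hkr : k ≤ (1 - δ) * r) (hcδ : 64 * Real.exp 1 * c ≤ δ)
    (hcn : 2 ≤ c * n) (hrc : r ≤ c / 2 * n) (hrc' : r ≤ c ^ 2 / 16 * n) :
    (uniform n).real {C | ¬ IsCore C k (lenAtLeast n r C)} ≤
      4 * (((1 / 2 : ℝ) ^ (δ / 2)) ^ r / (1 - (1 / 2 : ℝ) ^ (δ / 2))) + 96 * (16 / c ^ 4) / n := by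
  have hn0 : (0 : ℝ) < n := by exact_mod_cast (by omega : 0 < n)
  have hc : 0 < c := pos_of_mul_pos_left (by linarith) hn0.le
  have hb_le : (⌊c * n⌋₊ : ℝ) ≤ c * n := Nat.floor_le (by positivity)
  have hb_ge : c / 2 * n ≤ ⌊c * n⌋₊ := by linarith [Nat.lt_floor_add_one (c * n)]
  have hkb : (k : ℝ) ≤ (⌊c * n⌋₊ : ℝ) ^ 2 / (4 * n) := calc
    (k : ℝ) ≤ (1 - δ) * r := hkr
    _ ≤ r := mul_le_of_le_one_left r.cast_nonneg (by linarith)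
    _ ≤ c ^ 2 / 16 * n := hrc'
    _ = (c / 2 * n) ^ 2 / (4 * n) := by field_simp; norm_num
    _ ≤ _ := by gcongr
  have hbn : 64 * Real.exp 1 * ⌊c * n⌋₊ ≤ δ * n := calc
    _ ≤ 64 * Real.exp 1 * (c * n) := by gcongr
    _ = 64 * Real.exp 1 * c * n := by ring
    _ ≤ δ * n := by gcongr
  refine (real_not_isCore_lenAtLeast_le hn hr (by exact_mod_cast (hrc.trans hb_ge)) hkb hδ hδ1
    hkr hbn).trans (add_le_add_right ?_ _)
  calc (96 * n ^ 3 / (⌊c * n⌋₊ : ℝ) ^ 4 : ℝ) ≤ 96 * n ^ 3 / (c / 2 * n) ^ 4 := by gcongr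
    _ = 96 * (16 / c ^ 4) / n := by field_simp; norm_num

lemma tendsto_real_not_isCore_lenAtLeast {k r : ℕ → ℕ} {δ : ℝ} (hδ : 0 < δ) (hδ1 : δ ≤ 1)
    (hr : Tendsto r atTop atTop) (hrn : Tendsto (fun n => (r n / n : ℝ)) atTop (nhds 0))
    (hkr : ∀ n, (k n : ℝ) ≤ (1 - δ) * r n) :
    Tendsto (fun n => (uniform n).real {C | ¬ IsCore C (k n) (lenAtLeast n (r n) C)})
      atTop (nhds 0) := by
  set c : ℝ := δ / (64 * Real.exp 1)
  have hc0 : 0 < c := by positivity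
  set ρ : ℝ := (1 / 2 : ℝ) ^ (δ / 2)
  have hρ1 : ρ < 1 := Real.rpow_lt_one (by norm_num) (by norm_num) (by positivity)
  have hlim : Tendsto (fun n => 4 * (ρ ^ r n / (1 - ρ)) + 96 * (16 / c ^ 4) / (n : ℝ))
      atTop (nhds 0) := by
    have hpow := (tendsto_pow_atTop_nhds_zero_of_lt_one (by positivity) hρ1).comp hr
    simpa using ((hpow.div_const (1 - ρ)).const_mul 4).add
      (tendsto_const_div_atTop_nhds_zero_nat (96 * (16 / c ^ 4)))
  refine squeeze_zero' (.of_forall fun _ => measureReal_nonneg) ?_ hlim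
  have hcn := (tendsto_natCast_atTop_atTop (R := ℝ)).const_mul_atTop hc0
  filter_upwards [eventually_ge_atTop 3, hr.eventually_gt_atTop 0, hcn.eventually_ge_atTop 2,
    hrn.eventually_lt_const (half_pos hc0),
    hrn.eventually_lt_const (by positivity : 0 < c ^ 2 / 16)] with n hn hr0 hcn hrc hrc'
  have hn0 : (0 : ℝ) < n := by exact_mod_cast (by omega : 0 < n)
  exact real_not_isCore_lenAtLeast_le_div hn hr0 hδ hδ1 (hkr n)
    (mul_div_cancel₀ δ (by positivity)).le hcn ((div_lt_iff₀ hn0).1 hrc).le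
    ((div_lt_iff₀ hn0).1 hrc').le

lemma abs_sub_kCoreSize_div_sub_one_le {ε c : ℝ} {k r : ℕ} {C : ChordDiagram n} (hk : 0 < k)
    (hcε : c ≤ ε) (hr : (1 + c) * r ≤ (1 + ε) * k) (hcore : IsCore C k (lenAtLeast n r C))
    (hZk : |(shortCount n k C : ℝ) - k| < c * k) (hZr : |(shortCount n r C : ℝ) - r| < c * r) :
    |((n : ℝ) - kCoreSize n k C) / k - 1| ≤ ε := by
  have hk' : (0 : ℝ) < k := by exact_mod_cast hk
  have hlower : (kCoreSize n k C + shortCount n k C : ℝ) ≤ n := by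
    exact_mod_cast kCoreSize_add_shortCount_le k C
  have hupper : (n : ℝ) ≤ kCoreSize n k C + shortCount n r C := by
    exact_mod_cast le_kCoreSize_add_shortCount hcore
  have hcε' : c * k ≤ ε * k := by gcongr
  rw [div_sub_one hk'.ne', abs_div, abs_of_pos hk', div_le_iff₀ hk', abs_le]
  rw [abs_lt] at hZk hZr
  constructor <;> linarith

lemma exists_one_add_div_one_sub_lt {ε : ℝ} (hε : 0 < ε) :
    ∃ c, 0 < c ∧ c < 1 ∧ c ≤ ε ∧ (1 - c)⁻¹ < (1 + ε) / (1 + c) := by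
  have hm : 0 < min ε 1 := lt_min hε one_pos
  refine ⟨min ε 1 / 4, by positivity, ?_, ?_, ?_⟩
  · linarith [min_le_right ε 1]
  · linarith [min_le_left ε 1]
  · have h1 := min_le_right ε 1
    rw [inv_eq_one_div, div_lt_div_iff₀ (by linarith) (by linarith)]
    nlinarith [min_le_left ε 1]

lemma tendsto_real_lt_abs_sub_kCoreSize {ε c : ℝ} {k r : ℕ → ℕ} (hc : 0 < c) (hc1 : c ≤ 1)
    (hcε : c ≤ ε) (hk : Tendsto k atTop atTop) (hkr : ∀ n, (k n : ℝ) ≤ (1 - c) * r n)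
    (hrk : ∀ᶠ n in atTop, (1 + c) * r n ≤ (1 + ε) * k n)
    (hrn : Tendsto (fun n => (r n / n : ℝ)) atTop (nhds 0)) :
    Tendsto (fun n => (uniform n).real {C | ε < |((n : ℝ) - kCoreSize n (k n) C) / k n - 1|})
      atTop (nhds 0) := by
  have hkr_nat : ∀ n, k n ≤ r n := fun n => by
    exact_mod_cast (hkr n).trans (mul_le_of_le_one_left (r n).cast_nonneg (by linarith))
  have hr : Tendsto r atTop atTop := tendsto_atTop_mono hkr_nat hk
  have hr_lt : ∀ᶠ n in atTop, r n < n := by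
    filter_upwards [hrn.eventually_lt_const one_pos, eventually_gt_atTop 0] with n hlt hn
    rw [div_lt_one (by exact_mod_cast hn)] at hlt
    exact_mod_cast hlt
  have hk_lt : ∀ᶠ n in atTop, k n < n := hr_lt.mono fun n hn => (hkr_nat n).trans_lt hn
  have hlim := ((tendsto_real_not_isCore_lenAtLeast hc hc1 hr hrn hkr).add
    (tendsto_real_le_abs_shortCount_sub hk hk_lt hc)).add
    (tendsto_real_le_abs_shortCount_sub hr hr_lt hc)
  rw [add_zero, add_zero] at hlim
  refine squeeze_zero' (.of_forall fun _ => measureReal_nonneg) ?_ hlim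
  filter_upwards [hk.eventually_gt_atTop 0, hrk] with n hk0 hrk
  refine le_trans (measureReal_mono (fun C hC => ?_) (measure_ne_top _ _))
    ((measureReal_union_le _ _).trans (add_le_add_left (measureReal_union_le _ _) _))
  by_contra h
  simp only [Set.mem_union, Set.mem_ofPred_eq, not_or, not_not, not_le] at h
  exact (abs_sub_kCoreSize_div_sub_one_le hk0 hcε hrk h.1.1 h.1.2 h.2).not_gt hC

end Core

end ChordDiagram

theorem stmt8_general (k : ℕ → ℕ) (hk1 : Filter.Tendsto k Filter.atTop Filter.atTop)
    (hk2 : Filter.Tendsto (fun n : ℕ => (k n : ℝ) / (n : ℝ)) Filter.atTop (nhds 0)) :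
    ∀ ε : ℝ, 0 < ε →
      Filter.Tendsto
        (fun n : ℕ => prob n (fun C =>
          ε < |((n : ℝ) - (kCoreSize n (k n) C : ℝ)) / (k n : ℝ) - 1|))
        Filter.atTop (nhds 0) := by
  intro ε hε
  obtain ⟨c, hc, hc1, hcε, hcc⟩ := ChordDiagram.exists_one_add_div_one_sub_lt hε
  set r : ℕ → ℕ := fun n => ⌈(1 - c)⁻¹ * k n⌉₊
  have hkr : ∀ n, (k n : ℝ) ≤ (1 - c) * r n := fun n =>
    (inv_mul_le_iff₀ (sub_pos.2 hc1)).1 (Nat.le_ceil _)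
  have hrk : Tendsto (fun n => (r n / k n : ℝ)) atTop (nhds (1 - c)⁻¹) :=
    (tendsto_nat_ceil_mul_div_atTop (inv_nonneg.2 (sub_nonneg.2 hc1.le))).comp
      (tendsto_natCast_atTop_atTop.comp hk1)
  have hrn : Tendsto (fun n => (r n / n : ℝ)) atTop (nhds 0) := by
    refine (mul_zero (1 - c)⁻¹ ▸ hrk.mul hk2).congr' ?_
    filter_upwards [hk1.eventually_gt_atTop 0] with n hn
    exact div_mul_div_cancel₀ (by exact_mod_cast hn.ne')
  have hrk_le : ∀ᶠ n in atTop, (1 + c) * r n ≤ (1 + ε) * k n := by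
    filter_upwards [hrk.eventually_lt_const hcc, hk1.eventually_gt_atTop 0] with n hlt hn
    rw [div_lt_div_iff₀ (by exact_mod_cast hn) (by linarith)] at hlt
    linarith
  simp only [ChordDiagram.prob_eq_real]
  exact ChordDiagram.tendsto_real_lt_abs_sub_kCoreSize hc hc1.le hcε hk1 hkr hrk_le hrn

theorem stmt8 (k : ℕ → ℕ) (hk1 : Filter.Tendsto k Filter.atTop Filter.atTop)
    (hk2 : Filter.Tendsto (fun n : ℕ => ((k n : ℝ))^2 / (n : ℝ)) Filter.atTop (nhds 0)) :
    ∀ ε : ℝ, 0 < ε →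
      Filter.Tendsto
        (fun n : ℕ => prob n (fun C =>
          ε < |((n : ℝ) - (kCoreSize n (k n) C : ℝ)) / (k n : ℝ) - 1|))
        Filter.atTop (nhds 0) :=
  stmt8_general k hk1 <| squeeze_zero (fun n => by positivity)
    (fun n => by gcongr; exact_mod_cast Nat.le_self_pow two_ne_zero (k n)) hk2
end

section
/- With high probability, the set Len_{⌊n^{3/5}⌋} of chords of D_n of length at least ⌊n^{3/5}⌋ is strongly connected as a subdiagram of the random oriented chord diagram D_n: for any two chords c, d of length at least ⌊n^{3/5}⌋ there is a directed path from c to d in the directed intersection graph of D_n using only chords of length at least ⌊n^{3/5}⌋. -/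
open scoped Classical
open Finset Filter

/-!
Cut the circle into *blocks* of about `k` endpoints, `k` being the length threshold, and a bounded
number of *regions* of about `n / 10` endpoints. A block and a region that are far apart are joined
by many chords: their number has mean of order `k` and, since distinct links are negatively
correlated, variance at most its mean, so by Chebyshev's inequality it is of order `k` except with
probability `O(1 / k)`. All these joining chords cross every chord that separates the block from the
region, and for two given such chords `a`, `b` each joining chord `e` has probability `1 / 4` of
giving a directed path `a → e → b`, independently of the others; some path exists except with
exponentially small probability. There are `O(n / k)` block-region pairs, so a union bound fails
with probability `O(n / k ^ 2)` up to exponentially small terms, which tends to `0` as soon as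
`k / √n → ∞`.

It remains to see that separation connects all long chords. Every chord of length at least `k`
separates some block from three consecutive regions, hence is mutually reachable with a *hub*, a
chord arching over the middle one from the outer two. Two hubs that are far apart separate a common
block-region pair, and any two hubs are both far from a suitable third one.
-/

section UniformProbability

open scoped BigOperators

variable {Ω Ω' : Type*} [Fintype Ω] [Fintype Ω'] {E F : Ω → Prop}

/-- The probability of the event `E` for a uniformly random element of the finite type `Ω`.
The probabilities `prob n` and `probD n` are its instances for `ChordDiagram n` and
`OrientedChordDiagram n`. -/
noncomputable def unifProb (E : Ω → Prop) : ℝ :=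
  (#{ω | E ω} : ℝ) / #(univ : Finset Ω)

lemma unifProb_eq_expect (E : Ω → Prop) : unifProb E = 𝔼 ω, if E ω then (1 : ℝ) else 0 := by
  rw [Fintype.expect_eq_sum_div_card, sum_boole, unifProb, card_univ]

lemma unifProb_mono (h : ∀ ω, E ω → F ω) : unifProb E ≤ unifProb F := by
  unfold unifProb
  gcongr with ω
  exact h ω

lemma unifProb_le_one (E : Ω → Prop) : unifProb E ≤ 1 :=
  div_le_one_of_le₀ (mod_cast card_filter_le _ _) (by positivity)

lemma unifProb_true [Nonempty Ω] : unifProb (fun _ : Ω ↦ True) = 1 := by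
  simp [unifProb_eq_expect]

lemma one_sub_unifProb_not [Nonempty Ω] (E : Ω → Prop) :
    1 - unifProb (fun ω ↦ ¬ E ω) = unifProb E := by
  rw [sub_eq_iff_eq_add, unifProb, unifProb, ← add_div, ← Nat.cast_add,
    card_filter_add_card_filter_not, div_self (by simp)]

lemma unifProb_or_le (E F : Ω → Prop) :
    unifProb (fun ω ↦ E ω ∨ F ω) ≤ unifProb E + unifProb F := by
  simp_rw [unifProb, ← add_div, filter_or]
  gcongr
  exact_mod_cast card_union_le _ _

lemma unifProb_exists_le {ι : Type*} (s : Finset ι) (E : ι → Ω → Prop) {c : ℝ}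
    (h : ∀ i ∈ s, unifProb (E i) ≤ c) : unifProb (fun ω ↦ ∃ i ∈ s, E i ω) ≤ #s * c := by
  calc unifProb (fun ω ↦ ∃ i ∈ s, E i ω) ≤ ∑ i ∈ s, unifProb (E i) := by
        simp_rw [unifProb, ← sum_div]
        gcongr
        refine mod_cast (card_le_card fun ω hω ↦ ?_).trans card_biUnion_le
        simpa using hω
    _ ≤ #s * c := (sum_le_card_nsmul _ _ _ h).trans_eq (nsmul_eq_mul _ _)

lemma unifProb_comp_equiv (e : Ω' ≃ Ω) (E : Ω → Prop) :
    unifProb (fun ω ↦ E (e ω)) = unifProb E := by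
  simp_rw [unifProb_eq_expect]
  exact Fintype.expect_equiv e _ _ fun _ ↦ rfl

lemma unifProb_prod (E : Ω × Ω' → Prop) :
    unifProb E = 𝔼 ω, unifProb fun ω' ↦ E (ω, ω') := by
  simp_rw [unifProb_eq_expect, ← univ_product_univ]
  exact expect_product _ _ _

lemma unifProb_comp_fst [Nonempty Ω'] (E : Ω → Prop) :
    unifProb (fun p : Ω × Ω' ↦ E p.1) = unifProb E := by
  simp_rw [unifProb_prod, unifProb_eq_expect, Fintype.expect_const]

lemma unifProb_prod_le [Nonempty Ω] {E : Ω × Ω' → Prop} {c : ℝ}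
    (h : ∀ ω, unifProb (fun ω' ↦ E (ω, ω')) ≤ c) : unifProb E ≤ c := by
  rw [unifProb_prod]
  exact expect_le univ_nonempty fun ω _ ↦ h ω

lemma sum_unifProb_and_eq {α : Type*} (S : Finset α) (f : Ω → α)
    (h : ∀ ω, E ω → f ω ∈ S) : ∑ a ∈ S, unifProb (fun ω ↦ E ω ∧ f ω = a) = unifProb E := by
  simp_rw [unifProb_eq_expect, ← expect_sum_comm]
  refine expect_congr rfl fun ω _ ↦ ?_
  by_cases hω : E ω <;> simp [hω, h]

lemma expect_card_filter_mem {α β : Type*} [DecidableEq β] (f : Ω → α → β) (U : Finset α)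
    (V : Finset β) {p : ℝ} (hp : ∀ u ∈ U, ∀ v ∈ V, unifProb (fun ω ↦ f ω u = v) = p) :
    𝔼 ω, (#{u ∈ U | f ω u ∈ V} : ℝ) = #U * #V * p := by
  calc 𝔼 ω, (#{u ∈ U | f ω u ∈ V} : ℝ)
      = 𝔼 ω, ∑ u ∈ U, ∑ v ∈ V, if f ω u = v then (1 : ℝ) else 0 := by
        simp_rw [sum_ite_eq, sum_boole]
    _ = ∑ u ∈ U, ∑ v ∈ V, unifProb (fun ω ↦ f ω u = v) := by
        simp_rw [unifProb_eq_expect, expect_sum_comm]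
        congr!
    _ = #U * #V * p := by
        rw [sum_congr rfl fun u hu ↦ sum_congr rfl (hp u hu)]
        simp [mul_assoc]

lemma expect_sq_sub_const [Nonempty Ω] (X : Ω → ℝ) {μ : ℝ} (hX : 𝔼 ω, X ω = μ) :
    𝔼 ω, (X ω - μ) ^ 2 = 𝔼 ω, X ω ^ 2 - μ ^ 2 := by
  have expand (ω : Ω) : (X ω - μ) ^ 2 = X ω ^ 2 - 2 * μ * X ω + μ ^ 2 := by ring
  simp_rw [expand, expect_add_distrib, expect_sub_distrib, ← mul_expect, hX,
    Fintype.expect_const]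
  ring

lemma unifProb_le_sub_le (X : Ω → ℝ) (μ : ℝ) {t : ℝ} (ht : 0 < t) :
    unifProb (fun ω ↦ X ω ≤ μ - t) ≤ (𝔼 ω, (X ω - μ) ^ 2) / t ^ 2 := by
  rw [le_div_iff₀ (by positivity), unifProb_eq_expect, expect_mul]
  refine expect_le_expect fun ω _ ↦ ?_
  split_ifs with h
  · nlinarith
  · simp only [zero_mul]
    positivity

end UniformProbability

section RandomMatching

open scoped BigOperators

variable {n : ℕ}

instance : Nonempty (ChordDiagram n) :=
  ⟨Fin.rev, Fin.rev_rev, fun i h ↦ by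
    have := congrArg Fin.val h
    rw [Fin.val_rev] at this
    omega⟩

/-- Conjugation of chord diagrams by a permutation of the endpoints. -/
def conjEquiv (σ : Equiv.Perm (Fin (2 * n))) : ChordDiagram n ≃ ChordDiagram n where
  toFun C := ⟨fun i ↦ σ (C.1 (σ.symm i)), fun i ↦ by simp [C.2.1], fun i h ↦
    C.2.2 (σ.symm i) (σ.injective (by simpa using h))⟩
  invFun C := ⟨fun i ↦ σ.symm (C.1 (σ i)), fun i ↦ by simp [C.2.1], fun i h ↦
    C.2.2 (σ i) (σ.symm.injective (by simpa using h))⟩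
  left_inv C := by simp
  right_inv C := by simp

lemma conjEquiv_apply (σ : Equiv.Perm (Fin (2 * n))) (C : ChordDiagram n) (i : Fin (2 * n)) :
    (conjEquiv σ C).1 i = σ (C.1 (σ.symm i)) :=
  rfl

/-- Conjugation by the transpositions of `S` makes the partner of `x` uniform on `S` given `E`. -/
lemma unifProb_and_partner_eq {E : ChordDiagram n → Prop} {x : Fin (2 * n)}
    {S : Finset (Fin (2 * n))} (hx : x ∉ S) (hES : ∀ C, E C → C.1 x ∈ S)
    (hE : ∀ y ∈ S, ∀ z ∈ S, ∀ C, E (conjEquiv (Equiv.swap y z) C) ↔ E C)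
    {y : Fin (2 * n)} (hy : y ∈ S) :
    unifProb (fun C ↦ E C ∧ C.1 x = y) = unifProb E / #S := by
  have hS : (#S : ℝ) ≠ 0 := by exact_mod_cast (card_pos.2 ⟨y, hy⟩).ne'
  have swap_partner (z : Fin (2 * n)) (hz : z ∈ S) :
      unifProb (fun C ↦ E C ∧ C.1 x = z) = unifProb (fun C ↦ E C ∧ C.1 x = y) := by
    rw [← unifProb_comp_equiv (conjEquiv (Equiv.swap y z))]
    congr! 3 with C
    · exact hE y hy z hz C
    · rw [conjEquiv_apply, Equiv.symm_swap, Equiv.swap_apply_of_ne_of_ne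
        (ne_of_mem_of_not_mem hy hx).symm (ne_of_mem_of_not_mem hz hx).symm,
        Equiv.swap_apply_eq_iff, Equiv.swap_apply_right]
  rw [eq_div_iff hS, ← sum_unifProb_and_eq S _ hES, sum_congr rfl swap_partner, sum_const,
    nsmul_eq_mul, mul_comm]

lemma unifProb_partner_eq {x y : Fin (2 * n)} (hxy : y ≠ x) :
    unifProb (fun C : ChordDiagram n ↦ C.1 x = y) = 1 / (2 * n - 1) := by
  have h := unifProb_and_partner_eq (E := fun _ ↦ True) (x := x) (S := univ.erase x) (by simp)
    (fun C _ ↦ by simpa using C.2.2 x) (by simp) (by simpa using hxy)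
  simpa [unifProb_true, Nat.cast_pred x.pos] using h

lemma unifProb_partners_eq {x y x' y' : Fin (2 * n)} (hx : x' ≠ x) (hy : y' ≠ y)
    (hxy : y ≠ x) (hxy' : y' ≠ x) (hx'y : x' ≠ y) (hx'y' : y' ≠ x') :
    unifProb (fun C : ChordDiagram n ↦ C.1 x = y ∧ C.1 x' = y') =
      1 / ((2 * n - 1) * (2 * n - 3)) := by
  have h := unifProb_and_partner_eq (E := fun C ↦ C.1 x = y) (x := x') (S := {x, y, x'}ᶜ)
    (y := y') (by simp) ?_ ?_ (by simp [hxy', hy, hx'y'])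
  · have three_le : 3 ≤ 2 * n := by
      simpa [card_eq_three.2 ⟨x, y, x', hxy.symm, hx.symm, hx'y.symm, rfl⟩]
        using card_le_univ {x, y, x'}
    rw [h, unifProb_partner_eq hxy, card_compl, Fintype.card_fin,
      card_eq_three.2 ⟨x, y, x', hxy.symm, hx.symm, hx'y.symm, rfl⟩, Nat.cast_sub three_le,
      div_div]
    push_cast
    rfl
  · rintro C rfl
    simp only [mem_compl, mem_insert, mem_singleton, not_or]
    exact ⟨fun h ↦ hx'y (by rw [← h, C.2.1]),
      fun h ↦ hx (by rw [← C.2.1 x', h, C.2.1]), C.2.2 x'⟩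
  · intro u hu v hv C
    simp only [mem_compl, mem_insert, mem_singleton, not_or] at hu hv
    rw [conjEquiv_apply, Equiv.symm_swap,
      Equiv.swap_apply_of_ne_of_ne (Ne.symm hu.1) (Ne.symm hv.1), Equiv.swap_apply_eq_iff,
      Equiv.swap_apply_of_ne_of_ne (Ne.symm hu.2.1) (Ne.symm hv.2.1)]

/-- The endpoints in `I` whose chords lead to `R`. -/
def links (C : ChordDiagram n) (I R : Finset (Fin (2 * n))) : Finset (Fin (2 * n)) :=
  {e ∈ I | C.1 e ∈ R}

lemma mem_links {C : ChordDiagram n} {I R : Finset (Fin (2 * n))} {e : Fin (2 * n)} :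
    e ∈ links C I R ↔ e ∈ I ∧ C.1 e ∈ R :=
  mem_filter

variable {I R : Finset (Fin (2 * n))}

lemma expect_card_links (hIR : Disjoint I R) :
    𝔼 C, (#(links C I R) : ℝ) = #I * #R / (2 * n - 1) := by
  rw [← mul_one_div]
  exact expect_card_filter_mem (fun C : ChordDiagram n ↦ C.1) I R fun x hx y hy ↦
    unifProb_partner_eq (disjoint_iff_ne.1 hIR x hx y hy).symm

lemma offDiag_links (C : ChordDiagram n) :
    (links C I R).offDiag = {u ∈ I.offDiag | Prod.map C.1 C.1 u ∈ R.offDiag} := by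
  ext ⟨x, x'⟩
  have hinj : C.1 x = C.1 x' ↔ x = x' := (Function.Involutive.injective C.2.1).eq_iff
  simp only [mem_offDiag, mem_filter, mem_links, Prod.map_apply, Ne, hinj]
  tauto

lemma expect_card_offDiag_links (hIR : Disjoint I R) :
    𝔼 C, (#(links C I R).offDiag : ℝ) =
      #I.offDiag * #R.offDiag / ((2 * n - 1) * (2 * n - 3)) := by
  simp_rw [offDiag_links]
  rw [← mul_one_div]
  refine expect_card_filter_mem (fun C : ChordDiagram n ↦ Prod.map C.1 C.1) _ _ ?_
  rintro ⟨x, x'⟩ hx ⟨y, y'⟩ hy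
  rw [mem_offDiag] at hx hy
  have ne_of_mem {a b : Fin (2 * n)} (ha : a ∈ I) (hb : b ∈ R) : b ≠ a :=
    (disjoint_iff_ne.1 hIR a ha b hb).symm
  simp only [Prod.map_apply, Prod.mk.injEq]
  exact unifProb_partners_eq hx.2.2.symm hy.2.2.symm (ne_of_mem hx.1 hy.1)
    (ne_of_mem hx.1 hy.2.1) (ne_of_mem hx.2.1 hy.1).symm (ne_of_mem hx.2.1 hy.2.1)

lemma cast_card_offDiag {α : Type*} (s : Finset α) :
    (#s.offDiag : ℝ) = #s * (#s - 1) := by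
  rw [offDiag_card, Nat.cast_sub (Nat.le_mul_self _)]
  push_cast
  ring

lemma expect_card_offDiag_links_le (hIR : Disjoint I R) :
    𝔼 C, (#(links C I R).offDiag : ℝ) ≤ (#I * #R / (2 * n - 1)) ^ 2 := by
  rw [expect_card_offDiag_links hIR]
  rcases I.offDiag.eq_empty_or_nonempty with hI | hI
  · simp only [hI, card_empty, Nat.cast_zero, zero_mul, zero_div]
    positivity
  rcases R.offDiag.eq_empty_or_nonempty with hR | hR
  · simp only [hR, card_empty, Nat.cast_zero, mul_zero, zero_div]
    positivity
  have two_le_card {s : Finset (Fin (2 * n))} (hs : s.offDiag.Nonempty) : (2 : ℝ) ≤ #s := by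
    obtain ⟨u, hu⟩ := hs
    rw [mem_offDiag] at hu
    exact_mod_cast one_lt_card.2 ⟨u.1, hu.1, u.2, hu.2⟩
  have card_add_card : (#I + #R : ℝ) ≤ 2 * n := by
    have := card_le_univ (I ∪ R)
    rw [card_union_of_disjoint hIR, Fintype.card_fin] at this
    exact_mod_cast this
  have two_le_I := two_le_card hI
  have two_le_R := two_le_card hR
  have numerator_le : ((#I - 1) * (#R - 1) * (2 * n - 1) : ℝ) ≤ #I * #R * (2 * n - 3) := by
    nlinarith [sq_nonneg (#I - #R : ℝ)]
  rw [cast_card_offDiag, cast_card_offDiag, div_pow,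
    div_le_div_iff₀ (mul_pos (by linarith) (by linarith)) (pow_pos (by linarith) 2)]
  calc (#I * (#I - 1) * (#R * (#R - 1)) * (2 * n - 1) ^ 2 : ℝ)
      = #I * #R * (2 * n - 1) * ((#I - 1) * (#R - 1) * (2 * n - 1)) := by ring
    _ ≤ #I * #R * (2 * n - 1) * (#I * #R * (2 * n - 3)) := by
        gcongr
        exact mul_nonneg (by positivity) (by linarith)
    _ = _ := by ring

/-- Distinct links are negatively correlated, so the variance is at most the mean. -/
lemma variance_card_links_le (hIR : Disjoint I R) :
    𝔼 C, (#(links C I R) - #I * #R / (2 * n - 1) : ℝ) ^ 2 ≤ #I * #R / (2 * n - 1) := by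
  rw [expect_sq_sub_const _ (expect_card_links hIR)]
  have sq_eq (C : ChordDiagram n) :
      (#(links C I R) : ℝ) ^ 2 = #(links C I R) + #(links C I R).offDiag := by
    rw [cast_card_offDiag]
    ring
  simp_rw [sq_eq, expect_add_distrib, expect_card_links hIR]
  linarith [expect_card_offDiag_links_le hIR]

lemma unifProb_card_links_lt_le (hIR : Disjoint I R) {t : ℝ} (ht : 0 < t)
    (hmean : 2 * t ≤ #I * #R / (2 * n - 1)) :
    unifProb (fun C ↦ (#(links C I R) : ℝ) < t) ≤ 2 / t := by
  set μ : ℝ := #I * #R / (2 * n - 1) with hμ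
  calc unifProb (fun C ↦ (#(links C I R) : ℝ) < t)
      ≤ unifProb (fun C ↦ (#(links C I R) : ℝ) ≤ μ - μ / 2) :=
        unifProb_mono fun C hC ↦ by linarith
    _ ≤ (𝔼 C, ((#(links C I R) : ℝ) - μ) ^ 2) / (μ / 2) ^ 2 :=
        unifProb_le_sub_le _ _ (by linarith)
    _ ≤ μ / (μ / 2) ^ 2 := by
        gcongr
        exact variance_card_links_le hIR
    _ = 2 / (μ / 2) := by
        have : μ ≠ 0 := by linarith
        field_simp
    _ ≤ 2 / t := div_le_div_of_nonneg_left two_pos.le ht (by linarith)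

end RandomMatching

section Geometry

variable {n : ℕ} {C : ChordDiagram n} {x u : Fin (2 * n)}

/-- The smaller endpoint, as a natural number, of the chord of `C` containing `x`. -/
def lowEnd (C : ChordDiagram n) (x : Fin (2 * n)) : ℕ := min (x : ℕ) (C.1 x)

/-- The larger endpoint, as a natural number, of the chord of `C` containing `x`. -/
def highEnd (C : ChordDiagram n) (x : Fin (2 * n)) : ℕ := max (x : ℕ) (C.1 x)

lemma coe_chordRep (C : ChordDiagram n) (x : Fin (2 * n)) : (chordRep C x : ℕ) = lowEnd C x :=
  Fin.coe_min _ _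

lemma lowEnd_lt_highEnd (C : ChordDiagram n) (x : Fin (2 * n)) : lowEnd C x < highEnd C x :=
  min_lt_max.2 (Fin.val_ne_of_ne (C.2.2 x)).symm

lemma highEnd_lt (C : ChordDiagram n) (x : Fin (2 * n)) : highEnd C x < 2 * n :=
  max_lt x.2 (C.1 x).2

lemma partner_eq_partner_iff : (C.1 x : ℕ) = C.1 u ↔ (x : ℕ) = u := by
  rw [Fin.val_inj, Fin.val_inj, (Function.Involutive.injective C.2.1).eq_iff]

lemma partner_eq_iff : (C.1 x : ℕ) = u ↔ (x : ℕ) = C.1 u := by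
  rw [← partner_eq_partner_iff (x := x), C.2.1]

lemma highEnd_eq_highEnd_iff : highEnd C x = highEnd C u ↔ lowEnd C x = lowEnd C u := by
  have h₁ := partner_eq_partner_iff (C := C) (x := x) (u := u)
  have h₂ := partner_eq_iff (C := C) (x := x) (u := u)
  unfold lowEnd highEnd
  omega

lemma crosses_iff :
    Crosses C x u ↔
      lowEnd C x < lowEnd C u ∧ lowEnd C u < highEnd C x ∧ highEnd C x < highEnd C u ∨
        lowEnd C u < lowEnd C x ∧ lowEnd C x < highEnd C u ∧ highEnd C u < highEnd C x := by
  have h₁ := partner_eq_partner_iff (C := C) (x := x) (u := u)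
  have h₂ := partner_eq_iff (C := C) (x := x) (u := u)
  change Xor _ _ ↔ _
  simp only [Xor, Between, Fin.lt_def, Fin.coe_min, Fin.coe_max, lowEnd, highEnd]
  omega

lemma Crosses.symm (h : Crosses C x u) : Crosses C u x := by
  rw [crosses_iff] at h ⊢
  exact h.symm

lemma Crosses.chordRep_ne (h : Crosses C x u) : chordRep C x ≠ chordRep C u := by
  rw [crosses_iff] at h
  rw [← Fin.val_ne_iff, coe_chordRep, coe_chordRep]
  omega

lemma le_chordLength_iff {k : ℕ} :
    k ≤ chordLength C x ↔
      lowEnd C x + k + 1 ≤ highEnd C x ∧ highEnd C x + k + 1 ≤ 2 * n + lowEnd C x := by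
  have h₁ := lowEnd_lt_highEnd C x
  have h₂ := highEnd_lt C x
  change k ≤ min (highEnd C x - lowEnd C x - 1) (2 * n - (highEnd C x - lowEnd C x) - 1) ↔ _
  omega

end Geometry

section CoinFlips

lemma unifProb_comp_injective {ι κ γ : Type*} [Fintype ι] [Fintype κ] [Fintype γ]
    [DecidableEq ι] [DecidableEq κ] [Nonempty γ] {f : κ → ι} (hf : Function.Injective f)
    (E : (κ → γ) → Prop) :
    unifProb (fun β : ι → γ ↦ E (β ∘ f)) = unifProb E := by
  let e := Equiv.piEquivPiSubtypeProd (· ∈ Set.range f) fun _ ↦ γ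
  calc unifProb (fun β : ι → γ ↦ E (β ∘ f))
      = unifProb (fun ω : (Set.range f → γ) × ({i // i ∉ Set.range f} → γ) ↦
          E (ω.1 ∘ Equiv.ofInjective f hf)) :=
        unifProb_comp_equiv e fun ω ↦ E (ω.1 ∘ Equiv.ofInjective f hf)
    _ = unifProb (fun ω : Set.range f → γ ↦ E (ω ∘ Equiv.ofInjective f hf)) :=
        unifProb_comp_fst fun ω ↦ E (ω ∘ Equiv.ofInjective f hf)
    _ = unifProb E :=
        unifProb_comp_equiv ((Equiv.ofInjective f hf).symm.arrowCongr (Equiv.refl γ)) E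

lemma unifProb_forall_eq_prod {κ γ : Type*} [Fintype κ] [Fintype γ] [DecidableEq κ]
    (E : κ → γ → Prop) :
    unifProb (fun ω : κ → γ ↦ ∀ h, E h (ω h)) = ∏ h, unifProb (E h) := by
  have filter_eq : ({ω | ∀ h, E h (ω h)} : Finset (κ → γ)) =
      Fintype.piFinset fun h ↦ {x | E h x} := by
    ext ω
    simp
  simp_rw [unifProb, filter_eq, Fintype.card_piFinset, prod_div_distrib, card_univ,
    Fintype.card_pi]
  push_cast
  rfl

lemma unifProb_coins_forall_not_and {ι κ : Type*} [Fintype ι] [Fintype κ]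
    [DecidableEq ι] {p q : κ → ι}
    (hpq : Function.Injective (Sum.elim p q)) (s t : κ → Bool) :
    unifProb (fun β : ι → Bool ↦ ∀ h, ¬ (β (p h) = s h ∧ β (q h) = t h)) =
      (3 / 4) ^ Fintype.card κ := by
  have one_pair (a b : Bool) :
      unifProb (fun x : Bool × Bool ↦ ¬ (x.1 = a ∧ x.2 = b)) = 3 / 4 := by
    simp only [unifProb_eq_expect, Fintype.expect_eq_sum_div_card, Fintype.sum_prod_type,
      Fintype.sum_bool, Fintype.card_prod, Fintype.card_bool]
    cases a <;> cases b <;> norm_num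
  let e : (κ → Bool × Bool) ≃ (κ ⊕ κ → Bool) :=
    (Equiv.arrowProdEquivProdArrow κ (fun _ ↦ Bool) (fun _ ↦ Bool)).trans
      (Equiv.sumArrowEquivProdArrow κ κ Bool).symm
  calc unifProb (fun β : ι → Bool ↦ ∀ h, ¬ (β (p h) = s h ∧ β (q h) = t h))
      = unifProb (fun β : κ ⊕ κ → Bool ↦ ∀ h, ¬ (β (.inl h) = s h ∧ β (.inr h) = t h)) :=
        unifProb_comp_injective hpq fun β : κ ⊕ κ → Bool ↦
          ∀ h, ¬ (β (.inl h) = s h ∧ β (.inr h) = t h)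
    _ = unifProb (fun ω : κ → Bool × Bool ↦ ∀ h, ¬ ((ω h).1 = s h ∧ (ω h).2 = t h)) :=
        (unifProb_comp_equiv e fun β ↦ ∀ h, ¬ (β (.inl h) = s h ∧ β (.inr h) = t h)).symm
    _ = (3 / 4) ^ Fintype.card κ := by
        rw [unifProb_forall_eq_prod fun h (x : Bool × Bool) ↦ ¬ (x.1 = s h ∧ x.2 = t h)]
        simp only [one_pair, prod_const, card_univ]

end CoinFlips

section Relays

variable {n : ℕ}

/-- The index of the coin that orients the crossing of the chords of `x` and `u`. -/
def crossingCoin (C : ChordDiagram n) (x u : Fin (2 * n)) : Fin (2 * n) × Fin (2 * n) :=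
  (Sym2.sortEquiv s(chordRep C x, chordRep C u)).1

lemma overD_iff_coin_eq {C : ChordDiagram n} {β : Fin (2 * n) → Fin (2 * n) → Bool}
    {x u : Fin (2 * n)} (h : Crosses C x u) :
    OverD (C, β) x u ↔
      β.uncurry (crossingCoin C x u) = decide (chordRep C x ≤ chordRep C u) := by
  simp only [OverD, h, true_and, crossingCoin, Sym2.sortEquiv, Equiv.coe_fn_mk, Sym2.inf_mk,
    Sym2.sup_mk, Function.uncurry]
  rcases le_or_gt (chordRep C x) (chordRep C u) with hle | hlt
  · simp [hle, hle.not_gt]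
  · simp [hlt, hlt.le, hlt.not_ge]

lemma crossingCoin_eq_iff {C : ChordDiagram n} {x u y v : Fin (2 * n)} :
    crossingCoin C x u = crossingCoin C y v ↔
      s(chordRep C x, chordRep C u) = s(chordRep C y, chordRep C v) := by
  rw [crossingCoin, crossingCoin, Subtype.val_inj, EmbeddingLike.apply_eq_iff_eq]

/-- Any two distinct chords that both cross all of `L` are joined, in either order, by a directed
path of length two through a chord of `L`. -/
def Relays (D : OrientedChordDiagram n) (L : Finset (Fin (2 * n))) : Prop :=
  ∀ a b, chordRep D.1 a ≠ chordRep D.1 b → (∀ e ∈ L, Crosses D.1 a e ∧ Crosses D.1 b e) →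
    ∃ e ∈ L, OverD D a e ∧ OverD D e b

lemma unifProb_forall_not_relay {C : ChordDiagram n} {L : Finset (Fin (2 * n))}
    (hL : Set.InjOn (chordRep C) L) {a b : Fin (2 * n)} (hab : chordRep C a ≠ chordRep C b)
    (hcross : ∀ e ∈ L, Crosses C a e ∧ Crosses C b e) :
    unifProb (fun β ↦ ∀ e ∈ L, ¬ (OverD (C, β) a e ∧ OverD (C, β) e b)) = (3 / 4) ^ #L := by
  have coins_injective : Function.Injective
      (Sum.elim (fun e : L ↦ crossingCoin C a e) fun e : L ↦ crossingCoin C e b) := by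
    have rep_inj (e f : L) : chordRep C e = chordRep C f ↔ e = f :=
      hL.eq_iff e.2 f.2 |>.trans Subtype.val_inj
    have rep_ne (e : L) : chordRep C a ≠ chordRep C e ∧ chordRep C b ≠ chordRep C e :=
      ⟨(hcross e e.2).1.chordRep_ne, (hcross e e.2).2.chordRep_ne⟩
    rintro (e | e) (f | f) h <;>
      simp only [Sum.elim_inl, Sum.elim_inr, crossingCoin_eq_iff, Sym2.eq_iff] at h <;>
      grind
  calc unifProb (fun β ↦ ∀ e ∈ L, ¬ (OverD (C, β) a e ∧ OverD (C, β) e b))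
      = unifProb (fun β : Fin (2 * n) → Fin (2 * n) → Bool ↦ ∀ e : L,
          ¬ (β.uncurry (crossingCoin C a e) = decide (chordRep C a ≤ chordRep C e) ∧
            β.uncurry (crossingCoin C e b) = decide (chordRep C e ≤ chordRep C b))) := by
        congr! 2 with β
        rw [Subtype.forall]
        refine forall₂_congr fun e he ↦ ?_
        rw [overD_iff_coin_eq (hcross e he).1, overD_iff_coin_eq (hcross e he).2.symm]
    _ = unifProb (fun β : Fin (2 * n) × Fin (2 * n) → Bool ↦ ∀ e : L,
          ¬ (β (crossingCoin C a e) = decide (chordRep C a ≤ chordRep C e) ∧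
            β (crossingCoin C e b) = decide (chordRep C e ≤ chordRep C b))) :=
        unifProb_comp_equiv (Equiv.curry _ _ Bool).symm fun β ↦ ∀ e : L,
          ¬ (β (crossingCoin C a e) = decide (chordRep C a ≤ chordRep C e) ∧
            β (crossingCoin C e b) = decide (chordRep C e ≤ chordRep C b))
    _ = (3 / 4) ^ #L := by
        rw [unifProb_coins_forall_not_and coins_injective, Fintype.card_coe]

lemma unifProb_not_relays_le {C : ChordDiagram n} {L : Finset (Fin (2 * n))}
    (hL : Set.InjOn (chordRep C) L) :
    unifProb (fun β ↦ ¬ Relays (C, β) L) ≤ 4 * n ^ 2 * (3 / 4) ^ #L := by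
  let pairs : Finset (Fin (2 * n) × Fin (2 * n)) :=
    {u | chordRep C u.1 ≠ chordRep C u.2 ∧ ∀ e ∈ L, Crosses C u.1 e ∧ Crosses C u.2 e}
  calc unifProb (fun β ↦ ¬ Relays (C, β) L)
      ≤ unifProb (fun β ↦ ∃ u ∈ pairs, ∀ e ∈ L, ¬ (OverD (C, β) u.1 e ∧ OverD (C, β) e u.2)) := by
        refine unifProb_mono fun β h ↦ ?_
        simpa [Relays, pairs, and_assoc] using h
    _ ≤ #pairs * (3 / 4) ^ #L := by
        refine unifProb_exists_le _ _ fun u hu ↦ ?_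
        rw [mem_filter_univ] at hu
        exact (unifProb_forall_not_relay hL hu.1 hu.2).le
    _ ≤ 4 * n ^ 2 * (3 / 4) ^ #L := by
        gcongr
        calc (#pairs : ℝ) ≤ #(univ : Finset (Fin (2 * n) × Fin (2 * n))) :=
              mod_cast card_filter_le _ _
          _ = 4 * n ^ 2 := by
              simp only [card_univ, Fintype.card_prod, Fintype.card_fin]
              push_cast
              ring

end Relays

section Arcs

variable {n m r s p k a l b l' : ℕ} {C : ChordDiagram n} {c e : Fin (2 * n)}

/-- The set of `l` consecutive endpoints starting at `a`, truncated at `2 * n`. -/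
def arc (n a l : ℕ) : Finset (Fin (2 * n)) := {e | a ≤ (e : ℕ) ∧ (e : ℕ) < a + l}

lemma mem_arc : e ∈ arc n a l ↔ a ≤ (e : ℕ) ∧ (e : ℕ) < a + l :=
  mem_filter_univ _

lemma card_arc (h : a + l ≤ 2 * n) : #(arc n a l) = l := by
  have map_arc : (arc n a l).map Fin.valEmbedding = Ico a (a + l) := by
    ext i
    simp only [Finset.mem_map, mem_arc, mem_Ico, Fin.valEmbedding_apply]
    exact ⟨by rintro ⟨e, he, rfl⟩; exact he, fun hi ↦ ⟨⟨i, by omega⟩, hi, rfl⟩⟩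
  rw [← card_map Fin.valEmbedding, map_arc, Nat.card_Ico, Nat.add_sub_cancel_left]

lemma disjoint_arc (h : a + l ≤ b ∨ b + l' ≤ a) : Disjoint (arc n a l) (arc n b l') := by
  rw [disjoint_left]
  intro e he he'
  rw [mem_arc] at he he'
  omega

/-- The chord of `C` containing `c` has the arc `[a, a + l)` strictly between its endpoints and
the arc `[b, b + l')` outside, or vice versa. -/
def Separates (C : ChordDiagram n) (c : Fin (2 * n)) (a l b l' : ℕ) : Prop :=
  (lowEnd C c < a ∧ a + l ≤ highEnd C c) ∧ (b + l' ≤ lowEnd C c ∨ highEnd C c < b) ∨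
    (a + l ≤ lowEnd C c ∨ highEnd C c < a) ∧ (lowEnd C c < b ∧ b + l' ≤ highEnd C c)

lemma mem_links_arc_iff :
    e ∈ links C (arc n a l) (arc n b l') ↔
      (a ≤ (e : ℕ) ∧ (e : ℕ) < a + l) ∧ b ≤ (C.1 e : ℕ) ∧ (C.1 e : ℕ) < b + l' := by
  rw [mem_links, mem_arc, mem_arc]

lemma Separates.crosses (hc : Separates C c a l b l')
    (he : e ∈ links C (arc n a l) (arc n b l')) : Crosses C c e := by
  rw [mem_links_arc_iff] at he
  rw [crosses_iff, lowEnd.eq_def C e, highEnd.eq_def C e]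
  unfold Separates at hc
  omega

/-- The aligned arcs `[s, s + m)` (a *block*) and `[p, p + r)` (a *region*) are at cyclic distance
at least `r`; the region moreover keeps distance `r` from the base point `0 = 2 * n`. -/
structure FarArcs (n m r s p : ℕ) : Prop where
  dvd_block : m ∣ s
  dvd_region : r ∣ p
  block_le : s + m ≤ 2 * n
  le_region : r ≤ p
  region_le : p + 2 * r ≤ 2 * n
  far : s + m + r ≤ p ∨ p + 2 * r ≤ s

lemma FarArcs.disjoint (h : FarArcs n m r s p) : Disjoint (arc n s m) (arc n p r) :=
  disjoint_arc (by have := h.far; omega)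

lemma FarArcs.le_chordLength (h : FarArcs n m r s p)
    (he : e ∈ links C (arc n s m) (arc n p r)) : r ≤ chordLength C e := by
  rw [mem_links_arc_iff] at he
  rw [le_chordLength_iff, lowEnd, highEnd]
  obtain ⟨-, -, -, h₁, h₂, h₃⟩ := h
  have := e.2
  omega

lemma FarArcs.injOn_chordRep (h : FarArcs n m r s p) :
    Set.InjOn (chordRep C) (links C (arc n s m) (arc n p r)) := by
  intro e he f hf hef
  rw [mem_coe, mem_links_arc_iff] at he hf
  rw [← Fin.val_inj, coe_chordRep, coe_chordRep] at hef
  have partner := highEnd_eq_highEnd_iff.2 hef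
  have := h.far
  unfold lowEnd at hef
  unfold highEnd at partner
  omega

lemma exists_dvd_mem_Ico {d : ℕ} (hd : 0 < d) (u : ℕ) : ∃ s, d ∣ s ∧ u ≤ s ∧ s < u + d := by
  refine ⟨d * ((u + d - 1) / d), dvd_mul_right _ _, ?_, ?_⟩
  · have := Nat.lt_mul_div_succ (u + d - 1) hd
    rw [mul_add] at this
    omega
  · have := Nat.mul_div_le (u + d - 1) d
    omega

lemma exists_separates (hm : 0 < m) (hr : 0 < r) (hmk : 4 * m ≤ k) (hkr : k ≤ r) (hrn : 10 * r ≤ n)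
    (hc : k ≤ chordLength C c) :
    ∃ s q, m ∣ s ∧ s + m ≤ 2 * n ∧ r ∣ q ∧ q + 4 * r ≤ 2 * n ∧ Separates C c s m q (3 * r) := by
  rw [le_chordLength_iff] at hc
  have lo_lt := lowEnd_lt_highEnd C c
  have hi_lt := highEnd_lt C c
  unfold Separates
  set lo := lowEnd C c
  set hi := highEnd C c
  rcases le_or_gt n (hi - lo) with h_long | h_short
  · obtain ⟨q, hq, le_q, q_lt⟩ := exists_dvd_mem_Ico hr (lo + 1)
    rcases le_or_gt m lo with h | h
    · exact ⟨0, q, dvd_zero m, by omega, hq, by omega, by omega⟩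
    · obtain ⟨s, hs, le_s, s_lt⟩ := exists_dvd_mem_Ico hm (hi + 1)
      exact ⟨s, q, hs, by omega, hq, by omega, by omega⟩
  · obtain ⟨s, hs, le_s, s_lt⟩ := exists_dvd_mem_Ico hm (lo + 1)
    rcases le_or_gt (3 * r) lo with h | h
    · exact ⟨s, 0, hs, by omega, dvd_zero r, by omega, by omega⟩
    · obtain ⟨q, hq, le_q, q_lt⟩ := exists_dvd_mem_Ico hr (hi + 1)
      exact ⟨s, q, hs, by omega, hq, by omega, by omega⟩

end Arcs

section Reachability

variable {n m r s p q k : ℕ} {D : OrientedChordDiagram n} {a b c h h' : Fin (2 * n)}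

/-- Every block and region that are far apart are joined by a chord, and the chords joining them
relay between any two chords that cross all of them. -/
def WellLinked (D : OrientedChordDiagram n) (m r : ℕ) : Prop :=
  ∀ s p, FarArcs n m r s p →
    (links D.1 (arc n s m) (arc n p r)).Nonempty ∧ Relays D (links D.1 (arc n s m) (arc n p r))

/-- Directed reachability in both directions through chords of length at least `k`. -/
abbrev MutuallyReachable (D : OrientedChordDiagram n) (k : ℕ) :
    Fin (2 * n) → Fin (2 * n) → Prop :=
  AntisymmRel (Relation.ReflTransGen fun a b ↦
    a ∈ {x | k ≤ chordLength D.1 x} ∧ b ∈ {x | k ≤ chordLength D.1 x} ∧ OverD D a b)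

lemma WellLinked.mutuallyReachable_of_separates (hD : WellLinked D m r) (hkr : k ≤ r)
    (hsp : FarArcs n m r s p) (hab : chordRep D.1 a ≠ chordRep D.1 b)
    (ha : k ≤ chordLength D.1 a) (hb : k ≤ chordLength D.1 b)
    (ha_sep : Separates D.1 a s m p r) (hb_sep : Separates D.1 b s m p r) :
    MutuallyReachable D k a b := by
  have path {x y : Fin (2 * n)} (hxy : chordRep D.1 x ≠ chordRep D.1 y)
      (hx : k ≤ chordLength D.1 x) (hy : k ≤ chordLength D.1 y)
      (hx_sep : Separates D.1 x s m p r) (hy_sep : Separates D.1 y s m p r) :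
      Relation.ReflTransGen (fun a b ↦ a ∈ {x | k ≤ chordLength D.1 x} ∧
        b ∈ {x | k ≤ chordLength D.1 x} ∧ OverD D a b) x y := by
    obtain ⟨e, he, hxe, hey⟩ :=
      (hD s p hsp).2 x y hxy fun e he ↦ ⟨hx_sep.crosses he, hy_sep.crosses he⟩
    have e_long : k ≤ chordLength D.1 e := hkr.trans (hsp.le_chordLength he)
    exact .head ⟨hx, e_long, hxe⟩ (.single ⟨e_long, hy, hey⟩)
  exact ⟨path hab ha hb ha_sep hb_sep, path hab.symm hb ha hb_sep ha_sep⟩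

/-- The chord of `C` containing `h` is a *hub* at `q`: it arches over the region
`[q + r, q + 2 * r)`, with its endpoints in the two neighbouring regions. -/
structure IsHub (C : ChordDiagram n) (r q : ℕ) (h : Fin (2 * n)) : Prop where
  dvd : r ∣ q
  le : q + 4 * r ≤ 2 * n
  le_lowEnd : q ≤ lowEnd C h
  lowEnd_lt : lowEnd C h < q + r
  le_highEnd : q + 2 * r ≤ highEnd C h
  highEnd_lt : highEnd C h < q + 3 * r

lemma IsHub.le_chordLength {C : ChordDiagram n} (h_hub : IsHub C r q h) : r ≤ chordLength C h := by
  rw [le_chordLength_iff]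
  obtain ⟨-, h₁, -, h₃, h₄, h₅⟩ := h_hub
  omega

lemma IsHub.separates {C : ChordDiagram n} (h_hub : IsHub C r q h)
    (hs : s + m ≤ q ∨ q + 3 * r ≤ s) : Separates C h s m (q + r) r := by
  obtain ⟨-, -, h₂, h₃, h₄, h₅⟩ := h_hub
  unfold Separates
  omega

lemma WellLinked.exists_isHub (hD : WellLinked D m r) (hm : 0 < m) (hmr : 2 * m ≤ r) (hq : r ∣ q)
    (hqn : q + 4 * r ≤ 2 * n) : ∃ h, IsHub D.1 r q h := by
  obtain ⟨s, hs, le_s, s_lt⟩ := exists_dvd_mem_Ico hm q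
  have far : FarArcs n m r s (q + 2 * r) :=
    ⟨hs, hq.add (dvd_mul_left r 2), by omega, by omega, by omega, by omega⟩
  obtain ⟨h, hh⟩ := (hD _ _ far).1
  rw [mem_links_arc_iff] at hh
  exact ⟨h, hq, hqn, by unfold lowEnd; omega, by unfold lowEnd; omega, by unfold highEnd; omega,
    by unfold highEnd; omega⟩

lemma WellLinked.mutuallyReachable_hubs_of_far (hD : WellLinked D m r) (hm : 0 < m)
    (hmr : 2 * m ≤ r) (hkr : k ≤ r) (h_hub : IsHub D.1 r p h) (h_hub' : IsHub D.1 r q h')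
    (hpq : p + 2 * r ≤ q ∨ q + 2 * r ≤ p) : MutuallyReachable D k h h' := by
  obtain ⟨s, hs, le_s, s_lt⟩ := exists_dvd_mem_Ico hm (p + r)
  have h_long := hkr.trans h_hub.le_chordLength
  have h_long' := hkr.trans h_hub'.le_chordLength
  obtain ⟨-, h₁, h₂, h₃, h₄, h₅⟩ := h_hub
  obtain ⟨hq, h₁', h₂', h₃', h₄', h₅'⟩ := h_hub'
  have far : FarArcs n m r s (q + r) :=
    ⟨hs, hq.add dvd_rfl, by omega, by omega, by omega, by omega⟩
  have rep_ne : chordRep D.1 h ≠ chordRep D.1 h' := by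
    rw [← Fin.val_ne_iff, coe_chordRep, coe_chordRep]
    omega
  refine hD.mutuallyReachable_of_separates hkr far rep_ne h_long h_long' ?_ ?_ <;>
  · unfold Separates
    omega

lemma WellLinked.mutuallyReachable_hubs (hD : WellLinked D m r) (hm : 0 < m)
    (hmr : 2 * m ≤ r) (hkr : k ≤ r) (hrn : 10 * r ≤ n) (h_hub : IsHub D.1 r p h)
    (h_hub' : IsHub D.1 r q h') : MutuallyReachable D k h h' := by
  obtain ⟨t, ht, htn, hpt, htq⟩ : ∃ t, r ∣ t ∧ t + 4 * r ≤ 2 * n ∧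
      (p + 2 * r ≤ t ∨ t + 2 * r ≤ p) ∧ (t + 2 * r ≤ q ∨ q + 2 * r ≤ t) := by
    by_contra! no_far_multiple
    have h₁ := no_far_multiple 0 (dvd_zero r)
    have h₂ := no_far_multiple (4 * r) (dvd_mul_left r 4)
    have h₃ := no_far_multiple (8 * r) (dvd_mul_left r 8)
    omega
  obtain ⟨g, hg⟩ := hD.exists_isHub hm hmr ht htn
  exact (hD.mutuallyReachable_hubs_of_far hm hmr hkr h_hub hg hpt).trans
    (hD.mutuallyReachable_hubs_of_far hm hmr hkr hg h_hub' htq)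

lemma WellLinked.exists_isHub_mutuallyReachable (hD : WellLinked D m r) (hm : 0 < m)
    (hmk : 4 * m ≤ k) (hkr : k ≤ r) (hrn : 10 * r ≤ n) (hc : k ≤ chordLength D.1 c) :
    ∃ q h, IsHub D.1 r q h ∧ MutuallyReachable D k c h := by
  obtain ⟨s, q, hs, hsn, hq, hqn, hsep⟩ := exists_separates hm (by omega) hmk hkr hrn hc
  obtain ⟨h, h_hub⟩ := hD.exists_isHub hm (by omega) hq hqn
  have s_far : s + m ≤ q ∨ q + 3 * r ≤ s := by
    unfold Separates at hsep
    omega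
  have far : FarArcs n m r s (q + r) :=
    ⟨hs, hq.add dvd_rfl, hsn, by omega, by omega, by omega⟩
  have rep_ne : chordRep D.1 c ≠ chordRep D.1 h := by
    rw [← Fin.val_ne_iff, coe_chordRep, coe_chordRep]
    obtain ⟨-, -, h₂, h₃, -, -⟩ := h_hub
    unfold Separates at hsep
    omega
  refine ⟨q, h, h_hub, hD.mutuallyReachable_of_separates hkr far rep_ne hc
    (hkr.trans h_hub.le_chordLength) ?_ (h_hub.separates s_far)⟩
  unfold Separates at hsep ⊢
  omega

theorem WellLinked.stronglyConnectedIn (hD : WellLinked D m r) (hm : 0 < m) (hmk : 4 * m ≤ k)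
    (hkr : k ≤ r) (hrn : 10 * r ≤ n) :
    StronglyConnectedIn D {x | k ≤ chordLength D.1 x} := by
  intro c hc d hd
  obtain ⟨p, h, h_hub, hch⟩ := hD.exists_isHub_mutuallyReachable hm hmk hkr hrn hc
  obtain ⟨q, h', h_hub', hdh'⟩ := hD.exists_isHub_mutuallyReachable hm hmk hkr hrn hd
  exact (hch.trans ((hD.mutuallyReachable_hubs hm (by omega) hkr hrn h_hub h_hub').trans
    hdh'.symm)).1

end Reachability

section FailureProbability

variable {n m r s p T : ℕ}

lemma FarArcs.unifProb_not_linked_le (h : FarArcs n m r s p) (hT : 0 < T)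
    (hmean : 2 * (T : ℝ) ≤ m * r / (2 * n - 1)) :
    unifProb (fun D : OrientedChordDiagram n ↦
      ¬ ((links D.1 (arc n s m) (arc n p r)).Nonempty ∧
        Relays D (links D.1 (arc n s m) (arc n p r)))) ≤
      2 / T + 4 * n ^ 2 * (3 / 4) ^ T := by
  let L (C : ChordDiagram n) := links C (arc n s m) (arc n p r)
  have few_links : unifProb (fun D : OrientedChordDiagram n ↦ (#(L D.1) : ℝ) < T) ≤ 2 / T := by
    rw [unifProb_comp_fst fun C ↦ (#(L C) : ℝ) < T]
    refine unifProb_card_links_lt_le h.disjoint (mod_cast hT) ?_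
    rwa [card_arc h.block_le, card_arc (by have := h.region_le; omega)]
  have bad_coins : unifProb (fun D : OrientedChordDiagram n ↦ T ≤ #(L D.1) ∧ ¬ Relays D (L D.1)) ≤
      4 * n ^ 2 * (3 / 4) ^ T := by
    refine unifProb_prod_le fun C ↦ ?_
    by_cases hC : T ≤ #(L C)
    · calc unifProb (fun β ↦ T ≤ #(L C) ∧ ¬ Relays (C, β) (L C))
          ≤ unifProb (fun β ↦ ¬ Relays (C, β) (L C)) := unifProb_mono fun _ ↦ And.right
        _ ≤ 4 * n ^ 2 * (3 / 4) ^ #(L C) := unifProb_not_relays_le h.injOn_chordRep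
        _ ≤ 4 * n ^ 2 * (3 / 4) ^ T := by
            gcongr ?_ * ?_
            exact pow_le_pow_of_le_one (by norm_num) (by norm_num) hC
    · simp only [hC, false_and, unifProb_eq_expect, if_false, expect_const_zero]
      positivity
  calc _ ≤ unifProb (fun D : OrientedChordDiagram n ↦
        (#(L D.1) : ℝ) < T ∨ T ≤ #(L D.1) ∧ ¬ Relays D (L D.1)) := by
        refine unifProb_mono fun D hD ↦ ?_
        rw [Nat.cast_lt, or_iff_not_imp_left, not_lt]
        exact fun hTL ↦ ⟨hTL, fun hrel ↦ hD ⟨card_pos.1 (hT.trans_le hTL), hrel⟩⟩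
    _ ≤ 2 / T + 4 * n ^ 2 * (3 / 4) ^ T :=
        (unifProb_or_le _ _).trans (add_le_add few_links bad_coins)

/-- Regions have length `r ≥ n / 20`, so there are at most `40` of them; blocks have length `80 * T`
so that a block and a region are joined by `80 * T * r / (2 * n - 1) ≥ 2 * T` chords on average. -/
lemma unifProb_not_wellLinked_le (hT : 0 < T) (hn : n ≤ 20 * r) :
    unifProb (fun D : OrientedChordDiagram n ↦ ¬ WellLinked D (80 * T) r) ≤
      n / T * (2 / T + 4 * n ^ 2 * (3 / 4) ^ T) := by
  let pairs : Finset (ℕ × ℕ) := {u ∈ range (2 * n / (80 * T)) ×ˢ range 40 |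
    FarArcs n (80 * T) r (80 * T * u.1) (r * u.2)}
  calc unifProb (fun D : OrientedChordDiagram n ↦ ¬ WellLinked D (80 * T) r)
      ≤ unifProb (fun D : OrientedChordDiagram n ↦ ∃ u ∈ pairs,
          ¬ ((links D.1 (arc n (80 * T * u.1) (80 * T)) (arc n (r * u.2) r)).Nonempty ∧
            Relays D (links D.1 (arc n (80 * T * u.1) (80 * T)) (arc n (r * u.2) r)))) := by
        refine unifProb_mono fun D hD ↦ ?_
        unfold WellLinked at hD
        push Not at hD
        obtain ⟨s, p, h, hsp⟩ := hD
        obtain ⟨⟨i, rfl⟩, ⟨j, rfl⟩, hs, -, hp, -⟩ := id h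
        refine ⟨(i, j), ?_, by tauto⟩
        simp only [pairs, mem_filter, mem_product, mem_range]
        refine ⟨⟨?_, by nlinarith⟩, h⟩
        rw [Nat.lt_iff_add_one_le, Nat.le_div_iff_mul_le (by omega)]
        linarith
    _ ≤ #pairs * (2 / T + 4 * n ^ 2 * (3 / 4) ^ T) := by
        refine unifProb_exists_le _ _ fun u hu ↦ ?_
        have far := (mem_filter.1 hu).2
        refine far.unifProb_not_linked_le hT ?_
        have n_pos : (1 : ℝ) ≤ n := by
          have := far.block_le
          exact_mod_cast (by omega : 1 ≤ n)
        have n_le : (n : ℝ) ≤ 20 * r := mod_cast hn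
        rw [le_div_iff₀ (by linarith)]
        push_cast
        nlinarith [(Nat.cast_nonneg T : (0 : ℝ) ≤ T)]
    _ ≤ n / T * (2 / T + 4 * n ^ 2 * (3 / 4) ^ T) := by
        gcongr
        calc (#pairs : ℝ) ≤ (2 * n / (80 * T) : ℕ) * 40 := by
              exact_mod_cast (card_filter_le _ _).trans_eq (by simp)
          _ ≤ 2 * n / (80 * T) * 40 := by
              gcongr
              exact_mod_cast Nat.cast_div_le (α := ℝ) (m := 2 * n) (n := 80 * T)
          _ = n / T := by ring

lemma one_sub_le_probD_stronglyConnectedIn {k : ℕ} (hT : 0 < T) (hTk : 320 * T ≤ k)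
    (hkr : k ≤ r) (hrn : 10 * r ≤ n) (hnr : n ≤ 20 * r) :
    1 - n / T * (2 / T + 4 * n ^ 2 * (3 / 4) ^ T) ≤
      probD n fun D ↦ StronglyConnectedIn D {x | k ≤ chordLength D.1 x} := by
  calc 1 - n / T * (2 / T + 4 * n ^ 2 * (3 / 4) ^ T)
      ≤ 1 - unifProb (fun D : OrientedChordDiagram n ↦ ¬ WellLinked D (80 * T) r) :=
        sub_le_sub_left (unifProb_not_wellLinked_le hT hnr) 1
    _ = unifProb (fun D : OrientedChordDiagram n ↦ WellLinked D (80 * T) r) :=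
        one_sub_unifProb_not _
    _ ≤ unifProb (fun D : OrientedChordDiagram n ↦
          StronglyConnectedIn D {x | k ≤ chordLength D.1 x}) :=
        unifProb_mono fun D hD ↦ hD.stronglyConnectedIn (by omega) (by omega) hkr hrn

end FailureProbability

section Asymptotics

lemma tendsto_floor_div_sqrt {f : ℕ → ℝ} (hf : Tendsto (fun n ↦ f n / √n) atTop atTop) :
    Tendsto (fun n ↦ (⌊f n⌋₊ : ℝ) / √n) atTop atTop := by
  have lower (n : ℕ) : f n / √n - 1 ≤ (⌊f n⌋₊ : ℝ) / √n := by
    have inv_le : 1 / √(n : ℝ) ≤ 1 := by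
      rcases n.eq_zero_or_pos with rfl | hn
      · simp
      · exact div_le_one_of_le₀ (Real.one_le_sqrt.2 (mod_cast hn)) (Real.sqrt_nonneg _)
    calc f n / √n - 1 ≤ (⌊f n⌋₊ + 1) / √n - 1 := by
          gcongr
          exact (Nat.lt_floor_add_one _).le
      _ ≤ (⌊f n⌋₊ : ℝ) / √n := by
          rw [add_div]
          linarith
  exact tendsto_atTop_mono lower (tendsto_atTop_add_const_right _ (-1) hf)

lemma tendsto_failure_bound {T : ℕ → ℕ} (hT : Tendsto (fun n ↦ (T n : ℝ) / √n) atTop atTop) :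
    Tendsto (fun n : ℕ ↦ (n / T n * (2 / T n + 4 * n ^ 2 * (3 / 4) ^ T n) : ℝ)) atTop (nhds 0) := by
  have sqrt_sq (n : ℕ) : √(n : ℝ) ^ 2 = n := Real.sq_sqrt n.cast_nonneg
  have n_div_sq : Tendsto (fun n : ℕ ↦ (n / T n ^ 2 : ℝ)) atTop (nhds 0) := by
    simpa [div_pow, sqrt_sq] using hT.inv_tendsto_atTop.pow 2
  have T_tendsto : Tendsto T atTop atTop := by
    rw [← tendsto_natCast_atTop_iff (R := ℝ)]
    refine (hT.atTop_mul_atTop₀ (Real.tendsto_sqrt_atTop.comp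
      tendsto_natCast_atTop_atTop)).congr' ?_
    filter_upwards [eventually_gt_atTop 0] with n hn
    have : √(n : ℝ) ≠ 0 := by positivity
    exact div_mul_cancel₀ _ this
  have pow_mul : Tendsto (fun n ↦ (T n ^ 5 * (3 / 4) ^ T n : ℝ)) atTop (nhds 0) :=
    (tendsto_pow_const_mul_const_pow_of_abs_lt_one 5 (by norm_num [abs_of_pos])).comp T_tendsto
  have bound_tendsto := (n_div_sq.const_mul 2).add (pow_mul.const_mul 4)
  rw [mul_zero, mul_zero, add_zero] at bound_tendsto
  refine squeeze_zero' (.of_forall fun n ↦ by positivity) ?_ bound_tendsto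
  filter_upwards [hT.eventually_ge_atTop 1, eventually_gt_atTop 0] with n h_ge hn
  have sqrt_pos : 0 < √(n : ℝ) := by positivity
  have sqrt_le : √(n : ℝ) ≤ T n := (one_le_div₀ sqrt_pos).1 h_ge
  have T_pos : (0 : ℝ) < T n := sqrt_pos.trans_le sqrt_le
  have n_le : (n : ℝ) ≤ T n ^ 2 := (Real.sqrt_le_left T_pos.le).1 sqrt_le
  calc (n / T n * (2 / T n + 4 * n ^ 2 * (3 / 4) ^ T n) : ℝ)
      = 2 * (n / T n ^ 2) + 4 * (n ^ 3 / T n * (3 / 4) ^ T n) := by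
        field_simp
    _ ≤ 2 * (n / T n ^ 2) + 4 * ((T n ^ 2) ^ 3 / T n * (3 / 4) ^ T n) := by gcongr
    _ = 2 * (n / T n ^ 2) + 4 * (T n ^ 5 * (3 / 4) ^ T n) := by
        field_simp

lemma tendsto_rpow_div_sqrt {α : ℝ} (hα : 1 / 2 < α) :
    Tendsto (fun n : ℕ ↦ (n : ℝ) ^ α / √n) atTop atTop := by
  refine ((tendsto_rpow_atTop (sub_pos.2 hα)).comp tendsto_natCast_atTop_atTop).congr' ?_
  filter_upwards [eventually_gt_atTop 0] with n hn
  rw [Function.comp_apply, Real.rpow_sub (mod_cast hn), Real.sqrt_eq_rpow]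

lemma eventually_mul_floor_rpow_le {α : ℝ} (hα : α < 1) (c : ℕ) :
    ∀ᶠ n : ℕ in atTop, c * ⌊(n : ℝ) ^ α⌋₊ ≤ n := by
  have pow_tendsto := (tendsto_rpow_atTop (sub_pos.2 hα)).comp tendsto_natCast_atTop_atTop
  filter_upwards [pow_tendsto.eventually_ge_atTop c, eventually_gt_atTop 0] with n hc hn
  have : (c * ⌊(n : ℝ) ^ α⌋₊ : ℝ) ≤ n :=
    calc (c * ⌊(n : ℝ) ^ α⌋₊ : ℝ) ≤ n ^ (1 - α) * n ^ α :=
          mul_le_mul hc (Nat.floor_le (by positivity)) (by positivity) (by positivity)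
      _ = n := by rw [← Real.rpow_add (mod_cast hn), sub_add_cancel, Real.rpow_one]
  exact_mod_cast this

theorem stmt10_general {k : ℕ → ℕ} (hk : Tendsto (fun n ↦ (k n : ℝ) / √n) atTop atTop)
    (hkn : ∀ᶠ n in atTop, 10 * k n ≤ n) :
    Tendsto (fun n ↦ probD n fun D ↦ StronglyConnectedIn D {x | k n ≤ chordLength D.1 x})
      atTop (nhds 1) := by
  have hT : Tendsto (fun n ↦ ((k n / 320 : ℕ) : ℝ) / √n) atTop atTop := by
    simp_rw [← Nat.floor_div_eq_div (K := ℝ)]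
    exact tendsto_floor_div_sqrt
      ((hk.atTop_div_const (by norm_num)).congr fun n ↦ div_right_comm (k n : ℝ) _ _)
  have lower_tendsto := (tendsto_failure_bound hT).const_sub 1
  rw [sub_zero] at lower_tendsto
  refine tendsto_of_tendsto_of_tendsto_of_le_of_le' lower_tendsto tendsto_const_nhds ?_
    (.of_forall fun n ↦ unifProb_le_one _)
  filter_upwards [hkn, hT.eventually_gt_atTop 0, eventually_ge_atTop 10] with n hn h_pos hn10
  have T_pos : 0 < k n / 320 := by
    by_contra! h
    simp [Nat.le_zero.1 h] at h_pos
  exact one_sub_le_probD_stronglyConnectedIn (r := n / 10) T_pos (Nat.mul_div_le _ _) (by omega)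
    (by omega) (by omega)

end Asymptotics

theorem stmt10 :
    Filter.Tendsto
      (fun n : ℕ => probD n (fun D =>
        StronglyConnectedIn D {x | ⌊(n:ℝ) ^ ((3:ℝ)/5)⌋₊ ≤ chordLength D.1 x}))
      Filter.atTop (nhds 1) :=
  stmt10_general (tendsto_floor_div_sqrt (tendsto_rpow_div_sqrt (by norm_num)))
    (eventually_mul_floor_rpow_le (by norm_num) 10)
end

section
/- With high probability, as n→∞, the uniformly random chord diagram C_n contains no block of 3⌊n^{3/5}⌋ consecutive endpoints (taken cyclically modulo 2n) that contains at least ⌊n^{1/3}⌋ chords, i.e., at least ⌊n^{1/3}⌋ chords with both endpoints in the block. -/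
open scoped Classical
open Finset Filter

/-!
If a block contains `k` chords, then the smaller endpoints of these chords form a `k`-set `S` of
points of the block whose partners also lie in the block, outside `S`. Rerouting the chord of one
point of `S` to an arbitrary free point shows that each point of `S` has its partner in a given set
of size at most `t` with conditional probability at most `t / n`, so a block of length `t` contains
`k` chords with probability at most `t.choose k * (t / n) ^ k ≤ (t ^ 2 / n) ^ k / k !`. Since
`x ^ k / k ! ≤ exp (e * x - k)`, the union bound over the `2 * n` blocks tends to `0` as soon as
`t ^ 2 / n` and `log n` are both `o(k)`.
-/

section Prob

variable {n : ℕ}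

instance inst_s11 : Nonempty (ChordDiagram n) :=
  ⟨⟨Fin.rev, Fin.rev_rev, fun i h => by have := congrArg Fin.val h; grind⟩⟩

lemma card_chordDiagram_pos (n : ℕ) :
    (0 : ℝ) < #(univ : Finset (ChordDiagram n)) :=
  mod_cast univ_nonempty.card_pos

lemma prob_mono {E F : ChordDiagram n → Prop} (h : ∀ C, E C → F C) : prob n E ≤ prob n F := by
  unfold prob
  gcongr with C
  exact h C

lemma prob_le_one (E : ChordDiagram n → Prop) : prob n E ≤ 1 :=
  div_le_one_of_le₀ (mod_cast card_filter_le _ _) (Nat.cast_nonneg _)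

lemma prob_not (E : ChordDiagram n → Prop) : prob n (fun C => ¬ E C) = 1 - prob n E := by
  rw [eq_sub_iff_add_eq', prob, prob, ← add_div, div_eq_one_iff_eq (card_chordDiagram_pos n).ne']
  norm_cast
  convert card_filter_add_card_filter_not (s := univ) E

lemma prob_exists_mem_le {ι : Type*} (s : Finset ι) (E : ι → ChordDiagram n → Prop) :
    prob n (fun C => ∃ i ∈ s, E i C) ≤ ∑ i ∈ s, prob n (E i) := by
  simp only [prob, ← sum_div]
  gcongr
  norm_cast
  refine (card_le_card fun C hC => ?_).trans card_biUnion_le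
  simpa using hC

end Prob

namespace ChordDiagram

variable {n : ℕ} {S B : Finset (Fin (2 * n))} {x y z : Fin (2 * n)}

/-- The image of the chord diagram `C` under a permutation `σ` of the endpoints: `C` joins `x` to
`y` if and only if `C.relabel σ` joins `σ x` to `σ y`. -/
def relabel (C : ChordDiagram n) (σ : Equiv.Perm (Fin (2 * n))) : ChordDiagram n :=
  ⟨fun i => σ (C.1 (σ.symm i)), fun i => by simp [C.2.1], fun i h =>
    C.2.2 (σ.symm i) ((Equiv.eq_symm_apply σ).2 h)⟩

/-- The diagram obtained from `C` by moving the chord at `x` so that it ends at `y`; the former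
partners of `x` and of `y` become joined to each other. -/
def reroute (C : ChordDiagram n) (x y : Fin (2 * n)) : ChordDiagram n :=
  C.relabel (Equiv.swap (C.1 x) y)

lemma reroute_apply_self (C : ChordDiagram n) (hxy : x ≠ y) : (C.reroute x y).1 x = y := by
  simp [reroute, relabel, Equiv.swap_apply_of_ne_of_ne (C.2.2 x).symm hxy]

lemma reroute_apply_of_ne (C : ChordDiagram n) (hzx : z ≠ x) (hzCx : z ≠ C.1 x) (hzy : z ≠ y)
    (hCzy : C.1 z ≠ y) : (C.reroute x y).1 z = C.1 z := by
  have hCzCx : C.1 z ≠ C.1 x := (Function.LeftInverse.injective C.2.1).ne hzx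
  simp [reroute, relabel, Equiv.swap_apply_of_ne_of_ne, *]

lemma reroute_reroute (C : ChordDiagram n) (hxy : x ≠ y) :
    (C.reroute x y).reroute x (C.1 x) = C := by
  rw [reroute, reroute_apply_self C hxy, Equiv.swap_comm]
  exact Subtype.ext (funext fun i => by simp [reroute, relabel])

/-- `C` joins the points of `S` to points of `B`, and no two points of `S` to each other, so that
these points lie on `#S` distinct chords. -/
def PairsInto (C : ChordDiagram n) (S B : Finset (Fin (2 * n))) : Prop :=
  ∀ z ∈ S, C.1 z ∈ B \ S

/-- The points that are neither in `insert x S` nor joined by `C` to a point of `S`: the chord at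
`x` can be rerouted to any of them without affecting the chords at the points of `S`. -/
def freePoints (C : ChordDiagram n) (x : Fin (2 * n)) (S : Finset (Fin (2 * n))) :
    Finset (Fin (2 * n)) :=
  (insert x (S ∪ S.image C.1))ᶜ

lemma le_card_freePoints (C : ChordDiagram n) (x : Fin (2 * n)) (S : Finset (Fin (2 * n))) :
    2 * n - (2 * #S + 1) ≤ #(C.freePoints x S) := by
  have hinsert := card_insert_le x (S ∪ S.image C.1)
  have hunion := card_union_le S (S.image C.1)
  have himage : #(S.image C.1) ≤ #S := card_image_le
  rw [freePoints, card_compl, Fintype.card_fin]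
  omega

lemma PairsInto.reroute {C : ChordDiagram n} (hC : C.PairsInto (insert x S) B) (hx : x ∉ S)
    (hy : y ∈ C.freePoints x S) : (C.reroute x y).PairsInto S B := by
  intro z hz
  have hCx := hC x (mem_insert_self x S)
  have hCz := hC z (mem_insert_of_mem hz)
  simp only [Finset.mem_sdiff, mem_insert, not_or] at hCx hCz
  simp only [freePoints, mem_compl, mem_insert, mem_union, mem_image, not_or, not_exists,
    not_and] at hy
  rw [reroute_apply_of_ne C (ne_of_mem_of_not_mem hz hx) (ne_of_mem_of_not_mem hz hCx.2.2)
    (ne_of_mem_of_not_mem hz hy.2.1) (hy.2.2 z hz), Finset.mem_sdiff]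
  exact ⟨hCz.1, hCz.2.2⟩

-- `(C, y) ↦ (C.reroute x y, C.1 x)` is an involution on the pairs with `y ≠ x`, hence injective.
lemma card_pairsInto_insert_le (B : Finset (Fin (2 * n))) (hx : x ∉ S) :
    (2 * n - (2 * #S + 1)) * #{C : ChordDiagram n | C.PairsInto (insert x S) B} ≤
      #B * #{C : ChordDiagram n | C.PairsInto S B} := by
  set source : Finset (ChordDiagram n) := {C | C.PairsInto (insert x S) B}
  set target : Finset (ChordDiagram n) := {C | C.PairsInto S B}
  have ne_of_free {C : ChordDiagram n} {y : Fin (2 * n)} (hy : y ∈ C.freePoints x S) : x ≠ y := by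
    rintro rfl
    simp [freePoints] at hy
  have hmaps : ∀ p ∈ source.sigma (freePoints · x S),
      (p.1.reroute x p.2, p.1.1 x) ∈ target ×ˢ B := by
    rintro ⟨C, y⟩ hp
    obtain ⟨hC, hy⟩ := mem_sigma.1 hp
    replace hC : C.PairsInto (insert x S) B := (mem_filter.1 hC).2
    exact mem_product.2 ⟨mem_filter.2 ⟨mem_univ _, hC.reroute hx hy⟩,
      (Finset.mem_sdiff.1 (hC x (mem_insert_self x S))).1⟩
  have hinj : Set.InjOn (fun p : (_ : ChordDiagram n) × Fin (2 * n) =>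
      (p.1.reroute x p.2, p.1.1 x)) (source.sigma (freePoints · x S)) := by
    refine Set.LeftInvOn.injOn (f₁' := fun q => ⟨q.1.reroute x q.2, q.1.1 x⟩) ?_
    rintro ⟨C, y⟩ hp
    have hxy : x ≠ y := ne_of_free (mem_sigma.1 hp).2
    simp only [reroute_reroute C hxy, reroute_apply_self C hxy]
  calc (2 * n - (2 * #S + 1)) * #source
      = ∑ _C ∈ source, (2 * n - (2 * #S + 1)) := by rw [sum_const, smul_eq_mul, mul_comm]
    _ ≤ ∑ C ∈ source, #(C.freePoints x S) := sum_le_sum fun C _ => C.le_card_freePoints x S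
    _ = #(source.sigma (freePoints · x S)) := (card_sigma _ _).symm
    _ ≤ #(target ×ˢ B) := card_le_card_of_injOn _ hmaps hinj
    _ = #B * #target := by rw [card_product, mul_comm]

lemma prob_pairsInto_insert_le (B : Finset (Fin (2 * n))) (hx : x ∉ S) (hS : 2 * #S + 1 ≤ n) :
    prob n (·.PairsInto (insert x S) B) ≤ #B / n * prob n (·.PairsInto S B) := by
  have hn : (0 : ℝ) < n := mod_cast (by omega : 0 < n)
  have hcount : n * #{C : ChordDiagram n | C.PairsInto (insert x S) B} ≤
      #B * #{C : ChordDiagram n | C.PairsInto S B} :=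
    (Nat.mul_le_mul_right _ (by omega)).trans (card_pairsInto_insert_le B hx)
  rw [div_mul_eq_mul_div, le_div_iff₀' hn, prob, prob, mul_div_assoc', mul_div_assoc']
  exact div_le_div_of_nonneg_right (mod_cast hcount) (Nat.cast_nonneg _)

lemma prob_pairsInto_le (B : Finset (Fin (2 * n))) (hS : 2 * #S ≤ n) :
    prob n (·.PairsInto S B) ≤ (#B / n : ℝ) ^ #S := by
  induction S using Finset.induction_on with
  | empty => simpa using prob_le_one _
  | insert x S hx ih =>
    rw [card_insert_of_notMem hx] at hS ⊢
    calc prob n (·.PairsInto (insert x S) B)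
        ≤ #B / n * prob n (·.PairsInto S B) := prob_pairsInto_insert_le B hx (by omega)
      _ ≤ #B / n * (#B / n : ℝ) ^ #S := by gcongr; exact ih (by omega)
      _ = (#B / n : ℝ) ^ (#S + 1) := (pow_succ' _ _).symm

end ChordDiagram

section Block

variable {n : ℕ}

/-- The cyclic block `{i, i+1, …, i+t-1}` (mod `2n`) of endpoints. -/
noncomputable def block (n i t : ℕ) : Finset (Fin (2 * n)) :=
  {x | ∃ a < t, (x : ℕ) = (i + a) % (2 * n)}

lemma card_block_le (n i t : ℕ) : #(block n i t) ≤ t := by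
  have hsub : (block n i t).map Fin.valEmbedding ⊆
      (range t).image fun a => (i + a) % (2 * n) := by
    intro y hy
    obtain ⟨x, hx, rfl⟩ := mem_map.1 hy
    obtain ⟨a, ha, hxa⟩ := (mem_filter.1 hx).2
    exact mem_image.2 ⟨a, mem_range.2 ha, hxa.symm⟩
  calc #(block n i t) = #((block n i t).map Fin.valEmbedding) := (card_map _).symm
    _ ≤ #(range t) := (card_le_card hsub).trans card_image_le
    _ = t := card_range t

lemma exists_pairsInto_block {C : ChordDiagram n} {i t k : ℕ} (h : k ≤ chordsInBlock n C i t) :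
    ∃ S ∈ powersetCard k (block n i t), C.PairsInto S (block n i t) := by
  obtain ⟨S, hS, hcard⟩ := exists_subset_card_eq h
  have hlower : ∀ z ∈ S, z < C.1 z ∧ z ∈ block n i t ∧ C.1 z ∈ block n i t := fun z hz => by
    simpa [block] using hS hz
  refine ⟨S, mem_powersetCard.2 ⟨fun z hz => (hlower z hz).2.1, hcard⟩, fun z hz => ?_⟩
  refine Finset.mem_sdiff.2 ⟨(hlower z hz).2.2, fun hCz => ?_⟩
  have hlt := (hlower _ hCz).1
  rw [C.2.1] at hlt
  exact hlt.asymm (hlower z hz).1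

lemma prob_le_chordsInBlock_le (i t : ℕ) {k : ℕ} (hk : 2 * k ≤ n) :
    prob n (fun C => k ≤ chordsInBlock n C i t) ≤ ((t : ℝ) ^ 2 / n) ^ k / k.factorial := by
  calc prob n (fun C => k ≤ chordsInBlock n C i t)
      ≤ ∑ S ∈ powersetCard k (block n i t), prob n (·.PairsInto S (block n i t)) :=
        (prob_mono fun _ => exists_pairsInto_block).trans (prob_exists_mem_le _ _)
    _ ≤ ∑ _S ∈ powersetCard k (block n i t), (t / n : ℝ) ^ k := by
        refine sum_le_sum fun S hS => ?_
        obtain ⟨-, rfl⟩ := mem_powersetCard.1 hS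
        refine (ChordDiagram.prob_pairsInto_le _ hk).trans ?_
        gcongr
        exact card_block_le n i t
    _ = (#(block n i t)).choose k * (t / n : ℝ) ^ k := by
        rw [sum_const, card_powersetCard, nsmul_eq_mul]
    _ ≤ (t : ℝ) ^ k / k.factorial * (t / n : ℝ) ^ k := by
        gcongr
        exact (Nat.cast_le.2 (Nat.choose_le_choose k (card_block_le n i t))).trans
          (Nat.choose_le_pow_div k t)
    _ = ((t : ℝ) ^ 2 / n) ^ k / k.factorial := by
        rw [div_mul_eq_mul_div, ← mul_pow, mul_div_assoc', sq]

lemma pow_div_factorial_le_exp_sub {x : ℝ} (hx : 0 ≤ x) (k : ℕ) :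
    x ^ k / k.factorial ≤ Real.exp (Real.exp 1 * x - k) := by
  rw [Real.exp_sub, le_div_iff₀ (Real.exp_pos _), ← Real.exp_one_pow, div_mul_eq_mul_div,
    ← mul_pow, mul_comm x]
  exact Real.pow_div_factorial_le_exp _ (by positivity) k

lemma prob_exists_le_chordsInBlock_le (t : ℕ) {k : ℕ} (hn : 0 < n) (hk : 2 * k ≤ n) :
    prob n (fun C => ∃ i < 2 * n, k ≤ chordsInBlock n C i t) ≤
      2 * Real.exp (Real.log n + Real.exp 1 * ((t : ℝ) ^ 2 / n) - k) := by
  calc prob n (fun C => ∃ i < 2 * n, k ≤ chordsInBlock n C i t)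
      = prob n (fun C => ∃ i ∈ range (2 * n), k ≤ chordsInBlock n C i t) := by
        simp only [mem_range]
    _ ≤ ∑ i ∈ range (2 * n), prob n (fun C => k ≤ chordsInBlock n C i t) :=
        prob_exists_mem_le _ _
    _ ≤ ∑ _i ∈ range (2 * n), Real.exp (Real.exp 1 * ((t : ℝ) ^ 2 / n) - k) :=
        sum_le_sum fun i _ => (prob_le_chordsInBlock_le i t hk).trans
          (pow_div_factorial_le_exp_sub (by positivity) k)
    _ = 2 * Real.exp (Real.log n + Real.exp 1 * ((t : ℝ) ^ 2 / n) - k) := by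
        rw [sum_const, card_range, nsmul_eq_mul, add_sub_assoc, Real.exp_add,
          Real.exp_log (by positivity)]
        push_cast
        ring

end Block

section Asymptotics

open Asymptotics Topology

lemma tendsto_prob_not_exists_le_chordsInBlock {t k : ℕ → ℕ} (hk : ∀ᶠ n in atTop, 2 * k n ≤ n)
    (ht : (fun n => (t n : ℝ) ^ 2 / n) =o[atTop] fun n => (k n : ℝ))
    (hlog : (fun n : ℕ => Real.log n) =o[atTop] fun n => (k n : ℝ)) :
    Tendsto (fun n => prob n fun C => ¬ ∃ i < 2 * n, k n ≤ chordsInBlock n C i (t n))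
      atTop (𝓝 1) := by
  have hk_top : Tendsto (fun n => (k n : ℝ)) atTop atTop := by
    have hlog_top := Real.tendsto_log_atTop.comp tendsto_natCast_atTop_atTop
    have hnorm := hlog.isBigO.trans_tendsto_norm_atTop (tendsto_norm_atTop_atTop.comp hlog_top)
    simpa using hnorm
  have hexponent : Tendsto (fun n : ℕ =>
      Real.log n + Real.exp 1 * ((t n : ℝ) ^ 2 / n) - k n) atTop atBot := by
    have hequiv := (IsEquivalent.refl (u := fun n => (k n : ℝ))).sub_isLittleO
      (hlog.add (ht.const_mul_left (Real.exp 1)))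
    refine (tendsto_neg_atTop_atBot.comp (hequiv.symm.tendsto_atTop hk_top)).congr fun n => ?_
    simp
  have hlower := ((Real.tendsto_exp_atBot.comp hexponent).const_mul 2).const_sub 1
  rw [mul_zero, sub_zero] at hlower
  refine tendsto_of_tendsto_of_tendsto_of_le_of_le' hlower tendsto_const_nhds ?_
    (.of_forall fun n => prob_le_one _)
  filter_upwards [hk, eventually_gt_atTop 0] with n hkn hn
  rw [prob_not]
  exact sub_le_sub_left (prob_exists_le_chordsInBlock_le (t n) hn hkn) 1

lemma isLittleO_natCast_rpow_rpow {a b : ℝ} (hab : a < b) :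
    (fun n : ℕ => (n : ℝ) ^ a) =o[atTop] fun n : ℕ => (n : ℝ) ^ b := by
  refine .of_tendsto_div_atTop (((tendsto_rpow_atTop (sub_pos.2 hab)).comp
    tendsto_natCast_atTop_atTop).congr' ?_)
  filter_upwards [eventually_gt_atTop 0] with n hn
  exact Real.rpow_sub (by exact_mod_cast hn) b a

lemma sq_mul_floor_rpow_div_le (c : ℕ) (α : ℝ) {n : ℕ} (hn : 0 < n) :
    ((c * ⌊(n : ℝ) ^ α⌋₊ : ℕ) : ℝ) ^ 2 / n ≤ (c : ℝ) ^ 2 * (n : ℝ) ^ (2 * α - 1) := by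
  have hn' : (0 : ℝ) < n := mod_cast hn
  calc ((c * ⌊(n : ℝ) ^ α⌋₊ : ℕ) : ℝ) ^ 2 / n
      ≤ (c * (n : ℝ) ^ α) ^ 2 / n := by
        push_cast
        gcongr
        exact Nat.floor_le (by positivity)
    _ = (c : ℝ) ^ 2 * (n : ℝ) ^ (2 * α - 1) := by
        rw [Real.rpow_sub_one hn'.ne', mul_comm 2 α, Real.rpow_mul hn'.le, Real.rpow_two, mul_pow,
          mul_div_assoc]

theorem stmt11_general (c : ℕ) {α β : ℝ} (hβ₀ : 0 < β) (hβ₁ : β < 1) (hαβ : 2 * α < 1 + β) :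
    Tendsto (fun n : ℕ => prob n fun C =>
      ¬ ∃ i < 2 * n, ⌊(n : ℝ) ^ β⌋₊ ≤ chordsInBlock n C i (c * ⌊(n : ℝ) ^ α⌋₊)) atTop (𝓝 1) := by
  have hfloor : (fun n : ℕ => (n : ℝ) ^ β) =O[atTop] fun n : ℕ => (⌊(n : ℝ) ^ β⌋₊ : ℝ) :=
    (isEquivalent_nat_floor (R := ℝ)).symm.isBigO.comp_tendsto
      ((tendsto_rpow_atTop hβ₀).comp tendsto_natCast_atTop_atTop)
  refine tendsto_prob_not_exists_le_chordsInBlock ?_ (.trans_isBigO ?_ hfloor)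
    (.trans_isBigO ?_ hfloor)
  · have hlinear := (isLittleO_natCast_rpow_rpow hβ₁).bound one_half_pos
    filter_upwards [hlinear] with n hn
    have hle : (⌊(n : ℝ) ^ β⌋₊ : ℝ) ≤ (n : ℝ) ^ β := Nat.floor_le (by positivity)
    rw [Real.norm_of_nonneg (by positivity), Real.rpow_one, Real.norm_natCast] at hn
    exact_mod_cast (by linarith : 2 * (⌊(n : ℝ) ^ β⌋₊ : ℝ) ≤ n)
  · refine IsBigO.trans_isLittleO (.of_bound' ?_)
      ((isLittleO_natCast_rpow_rpow (by linarith : 2 * α - 1 < β)).const_mul_left ((c : ℝ) ^ 2))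
    filter_upwards [eventually_gt_atTop 0] with n hn
    rw [Real.norm_of_nonneg (by positivity), Real.norm_of_nonneg (by positivity)]
    exact sq_mul_floor_rpow_div_le c α hn
  · exact (isLittleO_log_rpow_atTop hβ₀).natCast_atTop

end Asymptotics

theorem stmt11 :
    Filter.Tendsto
      (fun n : ℕ => prob n (fun C =>
        ¬ ∃ i < 2*n, ⌊(n:ℝ) ^ ((1:ℝ)/3)⌋₊ ≤ chordsInBlock n C i (3 * ⌊(n:ℝ) ^ ((3:ℝ)/5)⌋₊)))
      Filter.atTop (nhds 1) :=
  stmt11_general 3 (by norm_num) (by norm_num) (by norm_num)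
end
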